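/- arXiv:2408.16910 — 3 statements merged into one kernel-verified Lean document; each statement's English description precedes it below -/
import Mathlib

section
/- Let k ≥ 2. For each 1 ≤ j ≤ k the map α_j is a bijection from ℱ onto 𝒜_j. Moreover ∂ : ℱ → ℱ is surjective, every fiber of ∂ has exactly k elements (one in each set 𝒜_1, …, 𝒜_k), and for each j the restriction of ∂ to 𝒜_j is a two-sided inverse of α_j: ∂(α_j(f)) = f for all f ∈ ℱ, and α_j(∂(f)) = f for all f ∈ 𝒜_j. -/
/-!
The scans `I^L` and `I^R` are determined by three order-theoretic properties, with no reference to
the greedy procedure: their elements lie in the support, distinct elements are at least `k` apart,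
and every point of the support lies in one of the length-`k` windows `[s, s + k)` (for `I^L`),
respectively `(s - k, s]` (for `I^R`). These are `LScan` and `RScan`; the greedy scans have the
properties (`lscan_IL`, `rscan_IR`), and the properties pin the set down (`LScan.unique`,
`RScan.unique`).

Both `α_j` and `∂` have the form: remove one unit at each point of a set, add one unit at each point
of another (`move`). All the `α_j` can be treated at once by an offset `c < k`, with `c = j` for
`j < k` and `c = 0` for `j = k`: if `S` is the left scan of `g` on the points beyond `c`, then `α_j`
moves units from `S` to `T = (S + k - 1) ∪ {c}`, the point `c` being dropped when `c = 0`. The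
windows `[s, s + k - 1]` are the same seen from their left ends `S` or their right ends `T`, and
moving the units keeps the support inside the windows, so `T` is the right scan of the new function
(`LScan.rscan_move`). Hence `∂` moves the units back. Conversely, if `T` is the right scan of `f`
and `T ∩ [1, k)` is `{c}` (empty if `c = 0`), then `S = {p ≥ 1 | p + k - 1 ∈ T}` is the left scan
beyond `c` of `∂ f` (`RScan.lscan_move`), so `α_j` undoes `∂`. Since the elements of a right scan are
`k` apart, `T` meets `[1, k)` in at most one point, so the sets `𝒜_1, …, 𝒜_k` partition `ℱ`
(`exists_mem_Aset`, `Aset_disjoint`), and the counting of fibers follows.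
-/

noncomputable section
open scoped Classical

/-- `ℱ`: frequency lists, i.e. finitely supported functions on the positive
integers (extended by `f 0 = 0`). -/
def Freq : Set (ℕ → ℕ) := {f | f 0 = 0 ∧ (Function.support f).Finite}

/-- The largest index in the support of `f` (junk value for infinite support). -/
def topBound (f : ℕ → ℕ) : ℕ := sSup {i | f i ≠ 0}

/-- Greedy left-to-right scan with the given fuel: repeatedly select the least
index `i ≥ lb` with `f i ≠ 0` and continue from `i + k`. -/
def ILaux (k : ℕ) (f : ℕ → ℕ) : ℕ → ℕ → Set ℕ
  | 0, _ => ∅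
  | fuel + 1, lb =>
    let i := sInf {j | lb ≤ j ∧ f j ≠ 0}
    if i = 0 then ∅ else insert i (ILaux k f fuel (i + k))

/-- `I^L_k(f)`: the greedily chosen left endpoints of forward clusters. -/
def IL (k : ℕ) (f : ℕ → ℕ) : Set ℕ := ILaux k f (topBound f + 1) 1

/-- Greedy right-to-left scan with the given fuel: repeatedly select the
greatest index `i` with `1 ≤ i ≤ b` and `f i ≠ 0`, continuing from `i - k`. -/
def IRaux (k : ℕ) (f : ℕ → ℕ) : ℕ → ℕ → Set ℕ
  | 0, _ => ∅
  | fuel + 1, b =>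
    let i := sSup {j | 1 ≤ j ∧ j ≤ b ∧ f j ≠ 0}
    if i = 0 then ∅ else insert i (IRaux k f fuel (i - k))

/-- `I^R_k(f)`: the greedily chosen right endpoints of backward clusters. -/
def IR (k : ℕ) (f : ℕ → ℕ) : Set ℕ := IRaux k f (topBound f + 1) (topBound f)

/-- The `k`-measure of a frequency list: the largest cardinality of a set of
positive indices in the support of `f` that pairwise differ by at least `k`. -/
def kmeasureF (k : ℕ) (f : ℕ → ℕ) : ℕ :=
  sSup {m | ∃ I : Finset ℕ, I.card = m ∧ (∀ i ∈ I, 1 ≤ i ∧ f i ≠ 0) ∧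
    ∀ i ∈ I, ∀ j ∈ I, i < j → i + k ≤ j}

/-- The size `|f| = Σ i·f(i)` of the partition with frequency list `f`. -/
def wt (f : ℕ → ℕ) : ℕ := ∑ i ∈ Finset.range (topBound f + 1), i * f i



/-- The map `∂` (for the `α`-encoding, with ambient parameter `k`): for every
`i ∈ I^R_k(f)`, decrease the value at `i` by one and, when `i - k + 1 ≥ 1`,
increase the value at `i - k + 1` by one. -/
def dmap (k : ℕ) (f : ℕ → ℕ) : ℕ → ℕ := fun p =>
  f p - (if p ∈ IR k f then 1 else 0) +
    (if 1 ≤ p ∧ p + k - 1 ∈ IR k f then 1 else 0)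

/-- The map `α_k`: for every `i ∈ I^L_k(f)`, decrease the value at `i` by one
and increase the value at `i + k - 1` by one. -/
def alphaTop (k : ℕ) (f : ℕ → ℕ) : ℕ → ℕ := fun p =>
  f p - (if p ∈ IL k f then 1 else 0) +
    (if ∃ i ∈ IL k f, p = i + k - 1 then 1 else 0)

/-- The map `α_j` for `1 ≤ j ≤ k` (ambient parameter `k`): for `j = k` it is
`alphaTop`; for `j < k`, it fixes values below `j`, increments the value at `j`,
and acts as `α_k` on the shifted tail `i ↦ f (j + i)`. -/
def alphaMap (k j : ℕ) (f : ℕ → ℕ) : ℕ → ℕ :=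
  if j = k then alphaTop k f
  else fun p =>
    if p < j then f p
    else if p = j then f j + 1
    else alphaTop k (fun i => f (j + i)) (p - j)

/-- The class `𝒜_j` (ambient parameter `k`): for `j < k` it consists of the
`f ∈ ℱ` with `min I^R_k(f) = j`; `𝒜_k` is the complement in `ℱ` of the others. -/
def Aset (k j : ℕ) : Set (ℕ → ℕ) :=
  if j = k then
    Freq \ ⋃ j' ∈ Finset.Ico 1 k, {f ∈ Freq | IsLeast (IR k f) j'}
  else {f ∈ Freq | IsLeast (IR k f) j}


/-! ### Characterization of the scans -/

/-- `S` is the left-to-right greedy scan of `f` on the integers beyond `c`, described intrinsically: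
points of the support beyond `c`, pairwise at distance at least `k`, whose forward windows
`[s, s + k)` cover the support beyond `c`. -/
structure LScan (k c : ℕ) (f : ℕ → ℕ) (S : Set ℕ) : Prop where
  mem : ∀ s ∈ S, c < s ∧ f s ≠ 0
  gap : ∀ s ∈ S, ∀ t ∈ S, s < t → s + k ≤ t
  cover : ∀ p, c < p → f p ≠ 0 → ∃ s ∈ S, s ≤ p ∧ p < s + k

/-- `S` is the right-to-left greedy scan of `f` on the positive integers up to `b`, described
intrinsically: points of the support, pairwise at distance at least `k`, whose backward windows
`(s - k, s]` cover the support. -/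
structure RScan (k b : ℕ) (f : ℕ → ℕ) (S : Set ℕ) : Prop where
  mem : ∀ s ∈ S, 1 ≤ s ∧ s ≤ b ∧ f s ≠ 0
  gap : ∀ s ∈ S, ∀ t ∈ S, s < t → s + k ≤ t
  cover : ∀ p, 1 ≤ p → p ≤ b → f p ≠ 0 → ∃ s ∈ S, p ≤ s ∧ s < p + k

theorem LScan.unique {k c : ℕ} {f : ℕ → ℕ} {S T : Set ℕ}
    (hS : LScan k c f S) (hT : LScan k c f T) : S = T := by
  have key : ∀ p, p ∈ S ↔ p ∈ T := by
    intro p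
    induction p using Nat.strong_induction_on with
    | _ p ih =>
      constructor
      · intro hp
        obtain ⟨t, ht, h1, h2⟩ := hT.cover p (hS.mem p hp).1 (hS.mem p hp).2
        rcases h1.lt_or_eq with h | h
        · have := hS.gap t ((ih t h).2 ht) p hp h
          omega
        · exact h ▸ ht
      · intro hp
        obtain ⟨t, ht, h1, h2⟩ := hS.cover p (hT.mem p hp).1 (hT.mem p hp).2
        rcases h1.lt_or_eq with h | h
        · have := hT.gap t ((ih t h).1 ht) p hp h
          omega
        · exact h ▸ ht
  exact Set.ext key

theorem RScan.unique {k b : ℕ} {f : ℕ → ℕ} {S T : Set ℕ}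
    (hS : RScan k b f S) (hT : RScan k b f T) : S = T := by
  -- Downward induction on `p`, run as strong induction on `n = b - p`.
  have key : ∀ n p, b - p = n → (p ∈ S ↔ p ∈ T) := by
    intro n
    induction n using Nat.strong_induction_on with
    | _ n ih =>
      intro p hn
      constructor
      · intro hp
        obtain ⟨h0, hb, hf⟩ := hS.mem p hp
        obtain ⟨t, ht, h1, h2⟩ := hT.cover p h0 hb hf
        rcases h1.lt_or_eq with h | h
        · have htb := (hT.mem t ht).2.1
          have := hS.gap p hp t ((ih (b - t) (by omega) t rfl).2 ht) h
          omega
        · exact h ▸ ht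
      · intro hp
        obtain ⟨h0, hb, hf⟩ := hT.mem p hp
        obtain ⟨t, ht, h1, h2⟩ := hS.cover p h0 hb hf
        rcases h1.lt_or_eq with h | h
        · have htb := (hS.mem t ht).2.1
          have := hT.gap p hp t ((ih (b - t) (by omega) t rfl).1 ht) h
          omega
        · exact h ▸ ht
  exact Set.ext fun p => key _ p rfl

/-- The bound on the support guarantees that the fuel does not run out before the scan is over. -/
theorem lscan_ILaux {k : ℕ} (hk : 1 ≤ k) {f : ℕ → ℕ} (fuel : ℕ) : ∀ c : ℕ,
    (∀ p, f p ≠ 0 → p < c + 1 + fuel) → LScan k c f (ILaux k f fuel (c + 1)) := by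
  induction fuel with
  | zero =>
    intro c h
    refine ⟨by simp [ILaux], by simp [ILaux], fun p hp hf => ?_⟩
    have := h p hf
    omega
  | succ n ih =>
    intro c h
    have hdef : ILaux k f (n + 1) (c + 1) =
        if sInf {j | c + 1 ≤ j ∧ f j ≠ 0} = 0 then ∅ else
          insert (sInf {j | c + 1 ≤ j ∧ f j ≠ 0})
            (ILaux k f n (sInf {j | c + 1 ≤ j ∧ f j ≠ 0} + k)) := rfl
    rcases Set.eq_empty_or_nonempty {j | c + 1 ≤ j ∧ f j ≠ 0} with he | hne
    · rw [hdef, he]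
      refine ⟨by simp, by simp, fun p hp hf => ?_⟩
      have : p ∈ {j | c + 1 ≤ j ∧ f j ≠ 0} := ⟨hp, hf⟩
      rw [he] at this
      exact this.elim
    · have hmem := Nat.sInf_mem hne
      have hmin : ∀ p, c < p → f p ≠ 0 → sInf {j | c + 1 ≤ j ∧ f j ≠ 0} ≤ p :=
        fun p hp hf => Nat.sInf_le ⟨hp, hf⟩
      rw [hdef]
      generalize sInf {j | c + 1 ≤ j ∧ f j ≠ 0} = i at hmem hmin
      obtain ⟨hi, hfi⟩ := hmem
      rw [if_neg (by omega)]
      obtain ⟨m, hm⟩ : ∃ m, i + k = m + 1 := ⟨i + k - 1, by omega⟩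
      rw [hm]
      have hr := ih m (fun p hp => by have := h p hp; omega)
      refine ⟨?_, ?_, ?_⟩
      · rintro s (rfl | hs)
        · exact ⟨hi, hfi⟩
        · have := hr.mem s hs
          exact ⟨by omega, this.2⟩
      · rintro s (rfl | hs) t (rfl | ht) hst
        · omega
        · have := hr.mem t ht
          omega
        · have := hr.mem s hs
          omega
        · exact hr.gap s hs t ht hst
      · intro p hp hf
        by_cases hpm : m < p
        · obtain ⟨s, hs, h1⟩ := hr.cover p hpm hf
          exact ⟨s, Or.inr hs, h1⟩
        · exact ⟨i, Or.inl rfl, hmin p hp hf, by omega⟩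

theorem rscan_IRaux {k : ℕ} (hk : 1 ≤ k) {f : ℕ → ℕ} (fuel : ℕ) : ∀ b : ℕ,
    b ≤ fuel → RScan k b f (IRaux k f fuel b) := by
  induction fuel with
  | zero =>
    intro b hb
    exact ⟨by simp [IRaux], by simp [IRaux], fun p hp hpb hf => by omega⟩
  | succ n ih =>
    intro b hb
    have hdef : IRaux k f (n + 1) b =
        if sSup {j | 1 ≤ j ∧ j ≤ b ∧ f j ≠ 0} = 0 then ∅ else
          insert (sSup {j | 1 ≤ j ∧ j ≤ b ∧ f j ≠ 0})
            (IRaux k f n (sSup {j | 1 ≤ j ∧ j ≤ b ∧ f j ≠ 0} - k)) := rfl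
    rcases Set.eq_empty_or_nonempty {j | 1 ≤ j ∧ j ≤ b ∧ f j ≠ 0} with he | hne
    · rw [hdef, he]
      refine ⟨by simp, by simp, fun p hp hpb hf => ?_⟩
      have : p ∈ {j | 1 ≤ j ∧ j ≤ b ∧ f j ≠ 0} := ⟨hp, hpb, hf⟩
      rw [he] at this
      exact this.elim
    · have hbdd : BddAbove {j | 1 ≤ j ∧ j ≤ b ∧ f j ≠ 0} := ⟨b, fun p hp => hp.2.1⟩
      have hmem := Nat.sSup_mem hne hbdd
      have hmax : ∀ p, 1 ≤ p → p ≤ b → f p ≠ 0 → p ≤ sSup {j | 1 ≤ j ∧ j ≤ b ∧ f j ≠ 0} :=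
        fun p hp hpb hf => le_csSup hbdd ⟨hp, hpb, hf⟩
      rw [hdef]
      generalize sSup {j | 1 ≤ j ∧ j ≤ b ∧ f j ≠ 0} = i at hmem hmax
      obtain ⟨hi, hib, hfi⟩ := hmem
      rw [if_neg (by omega)]
      have hr := ih (i - k) (by omega)
      refine ⟨?_, ?_, ?_⟩
      · rintro s (rfl | hs)
        · exact ⟨hi, hib, hfi⟩
        · have := hr.mem s hs
          exact ⟨this.1, by omega, this.2.2⟩
      · rintro s (rfl | hs) t (rfl | ht) hst
        · omega
        · have := hr.mem t ht
          omega
        · have := hr.mem s hs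
          omega
        · exact hr.gap s hs t ht hst
      · intro p hp hpb hf
        by_cases hpi : p ≤ i - k
        · obtain ⟨s, hs, h1⟩ := hr.cover p hp hpi hf
          exact ⟨s, Or.inr hs, h1⟩
        · exact ⟨i, Or.inl rfl, hmax p hp hpb hf, by omega⟩

theorem le_topBound {f : ℕ → ℕ} (hf : (Function.support f).Finite) {p : ℕ} (hp : f p ≠ 0) :
    p ≤ topBound f :=
  le_csSup (s := {i | f i ≠ 0}) hf.bddAbove hp

theorem lscan_IL {k : ℕ} (hk : 1 ≤ k) {f : ℕ → ℕ} (hf : (Function.support f).Finite) :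
    LScan k 0 f (IL k f) :=
  lscan_ILaux hk _ 0 fun p hp => by
    have := le_topBound hf hp
    omega

theorem rscan_IR {k : ℕ} (hk : 1 ≤ k) (f : ℕ → ℕ) : RScan k (topBound f) f (IR k f) :=
  rscan_IRaux hk _ _ (Nat.le_succ _)

/-- Any bound on the support may serve as the starting point of a right scan. -/
theorem RScan.eq_IR {k : ℕ} (hk : 1 ≤ k) {b : ℕ} {f : ℕ → ℕ} {T : Set ℕ} (hT : RScan k b f T)
    (hb : ∀ p, f p ≠ 0 → p ≤ b) : IR k f = T := by
  have hfin : (Function.support f).Finite := (Set.finite_Iic b).subset fun p hp => hb p hp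
  have h := rscan_IR hk f
  refine RScan.unique (b := b) ⟨?_, h.gap, ?_⟩ hT
  · intro s hs
    have := h.mem s hs
    exact ⟨this.1, hb s this.2.2, this.2.2⟩
  · intro p hp _ hf
    exact h.cover p hp (le_topBound hfin hf) hf

/-! ### Moving units between the two ends of the windows -/

/-- Remove one unit at each point of `S` and add one unit at each point of `T`. -/
def move (f : ℕ → ℕ) (S T : Set ℕ) : ℕ → ℕ := fun p =>
  f p - (if p ∈ S then 1 else 0) + (if p ∈ T then 1 else 0)

/-- Right ends of the windows with left ends in `S`, together with the extra point `c` if `c ≠ 0`. -/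
def rightEnds (k c : ℕ) (S : Set ℕ) : Set ℕ := {p | (∃ s ∈ S, p = s + k - 1) ∨ (p = c ∧ c ≠ 0)}

/-- Left ends of the windows with right ends in `T`; windows starting at or below `0` are dropped. -/
def leftEnds (k : ℕ) (T : Set ℕ) : Set ℕ := {p | 1 ≤ p ∧ p + k - 1 ∈ T}

theorem move_move {f : ℕ → ℕ} {S T : Set ℕ} (hS : ∀ s ∈ S, f s ≠ 0) (hST : ∀ s ∈ S, s ∉ T) :
    move (move f S T) T S = f := by
  funext p
  have h1 := hS p
  have h2 := hST p
  unfold move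
  by_cases hs : p ∈ S
  · have := h1 hs
    simp only [if_pos hs, if_neg (h2 hs)]
    omega
  · by_cases ht : p ∈ T <;> simp [hs, ht]

theorem move_ne_zero {f : ℕ → ℕ} {S T : Set ℕ} {p : ℕ} (h : move f S T p ≠ 0) :
    f p ≠ 0 ∨ p ∈ T := by
  unfold move at h
  by_cases ht : p ∈ T
  · exact Or.inr ht
  · left
    rw [if_neg ht] at h
    omega

theorem move_ne_zero_of_mem {f : ℕ → ℕ} {S T : Set ℕ} {p : ℕ} (h : p ∈ T) : move f S T p ≠ 0 := by
  simp [move, h]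

theorem LScan.not_mem_rightEnds {k c : ℕ} (hk : 2 ≤ k) {g : ℕ → ℕ} {S : Set ℕ}
    (hS : LScan k c g S) : ∀ s ∈ S, s ∉ rightEnds k c S := by
  rintro s hs (⟨t, ht, h⟩ | ⟨h, -⟩)
  · have := hS.gap t ht s hs (by omega)
    omega
  · have := (hS.mem s hs).1
    omega

theorem LScan.leftEnds_rightEnds {k c : ℕ} (hk : 2 ≤ k) (hc : c < k) {g : ℕ → ℕ} {S : Set ℕ}
    (hS : LScan k c g S) : leftEnds k (rightEnds k c S) = S := by
  ext p
  constructor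
  · rintro ⟨hp, ⟨s, hs, h⟩ | ⟨h, -⟩⟩
    · obtain rfl : p = s := by omega
      exact hs
    · omega
  · intro hp
    have := (hS.mem p hp).1
    exact ⟨by omega, Or.inl ⟨p, hp, rfl⟩⟩

/-- Moving the units of a left scan beyond `c` to the right ends of the windows, and adding a unit
at `c` if `c ≠ 0`, produces a function whose right scan is `rightEnds k c S`. -/
theorem LScan.rscan_move {k c : ℕ} (hk : 2 ≤ k) (hc : c < k) {g : ℕ → ℕ} {S : Set ℕ}
    (hS : LScan k c g S) {b : ℕ} (hb : ∀ p, move g S (rightEnds k c S) p ≠ 0 → p ≤ b) :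
    RScan k b (move g S (rightEnds k c S)) (rightEnds k c S) := by
  refine ⟨?_, ?_, ?_⟩
  · intro t ht
    refine ⟨?_, hb t (move_ne_zero_of_mem ht), move_ne_zero_of_mem ht⟩
    rcases ht with ⟨s, -, h⟩ | h <;> omega
  · rintro t (⟨s, hs, rfl⟩ | ⟨rfl, h⟩) u (⟨s', hs', rfl⟩ | ⟨rfl, h'⟩) htu
    · have := hS.gap s hs s' hs' (by omega)
      omega
    · omega
    · have := (hS.mem s' hs').1
      omega
    · omega
  · intro p hp _ hne
    rcases move_ne_zero hne with hg | hT
    · by_cases hcp : c < p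
      · obtain ⟨s, hs, h1, h2⟩ := hS.cover p hcp hg
        exact ⟨s + k - 1, Or.inl ⟨s, hs, rfl⟩, by omega, by omega⟩
      · exact ⟨c, Or.inr ⟨rfl, by omega⟩, by omega, by omega⟩
    · exact ⟨p, hT, le_rfl, by omega⟩

theorem RScan.rightEnds_leftEnds {k b c : ℕ} (hk : 2 ≤ k) {f : ℕ → ℕ} {T : Set ℕ}
    (hT : RScan k b f T) (hc : ∀ t, 1 ≤ t → t < k → (t ∈ T ↔ t = c)) (hck : c < k) :
    rightEnds k c (leftEnds k T) = T := by
  ext p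
  constructor
  · rintro (⟨s, ⟨hs, hsT⟩, rfl⟩ | ⟨rfl, h⟩)
    · exact hsT
    · exact (hc p (by omega) hck).2 rfl
  · intro hp
    have h1 := (hT.mem p hp).1
    by_cases hpk : p < k
    · have := (hc p h1 hpk).1 hp
      exact Or.inr ⟨this, by omega⟩
    · have e : p - (k - 1) + k - 1 = p := by omega
      exact Or.inl ⟨p - (k - 1), ⟨by omega, e.symm ▸ hp⟩, e.symm⟩

theorem RScan.not_mem_leftEnds {k b : ℕ} (hk : 2 ≤ k) {f : ℕ → ℕ} {T : Set ℕ}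
    (hT : RScan k b f T) : ∀ t ∈ T, t ∉ leftEnds k T := by
  rintro t ht ⟨h1, h2⟩
  have := hT.gap t ht _ h2 (by omega)
  omega

/-- Moving the units of a right scan to the left ends of the windows produces a function whose left
scan consists of these left ends. The left scan runs beyond the point `c` where the right scan meets
`[1, k)`; `c = 0` encodes that it does not. -/
theorem RScan.lscan_move {k b c : ℕ} (hk : 2 ≤ k) {f : ℕ → ℕ} {T : Set ℕ}
    (hT : RScan k b f T) (hb : ∀ p, f p ≠ 0 → p ≤ b)
    (hc : ∀ t, 1 ≤ t → t < k → (t ∈ T ↔ t = c)) (hck : c < k) :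
    LScan k c (move f T (leftEnds k T)) (leftEnds k T) := by
  refine ⟨?_, ?_, ?_⟩
  · rintro s hs
    refine ⟨?_, move_ne_zero_of_mem hs⟩
    obtain ⟨h1, h2⟩ := hs
    by_cases h0 : c = 0
    · omega
    · have := hT.gap c ((hc c (by omega) hck).2 rfl) _ h2 (by omega)
      omega
  · rintro s ⟨hs, hsT⟩ t ⟨ht, htT⟩ hst
    have := hT.gap _ hsT _ htT (by omega)
    omega
  · intro p hp hne
    rcases move_ne_zero hne with hf | hS
    · obtain ⟨t, ht, h1, h2⟩ := hT.cover p (by omega) (hb p hf) hf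
      have htk : k ≤ t := by
        by_contra htk
        have := (hc t (by omega) (by omega)).1 ht
        omega
      have e : t - (k - 1) + k - 1 = t := by omega
      exact ⟨t - (k - 1), ⟨by omega, e.symm ▸ ht⟩, by omega, by omega⟩
    · exact ⟨p, hS, le_rfl, by omega⟩

/-! ### The maps `α_j` and `∂` in terms of `move` -/

/-- The offset beyond which `α_j` performs its left scan: `j` if `j < k`, and `0` if `j = k`. -/
def offset (k j : ℕ) : ℕ := if j = k then 0 else j

theorem offset_lt {k j : ℕ} (hk : 2 ≤ k) (hj : j ≤ k) : offset k j < k := by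
  unfold offset
  split_ifs <;> omega

theorem exists_bound {f : ℕ → ℕ} (hf : f ∈ Freq) : ∃ b, ∀ p, f p ≠ 0 → p ≤ b :=
  ⟨topBound f, fun _ hp => le_topBound hf.2 hp⟩

theorem move_mem_Freq {f : ℕ → ℕ} {S T : Set ℕ} (hf : f ∈ Freq) (hT : T.Finite) (h0 : 0 ∉ T) :
    move f S T ∈ Freq := by
  refine ⟨?_, (hf.2.union hT).subset fun p hp => move_ne_zero hp⟩
  have := hf.1
  simp [move, h0, this]

theorem dmap_eq_move (k : ℕ) (f : ℕ → ℕ) :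
    dmap k f = move f (IR k f) (leftEnds k (IR k f)) := by
  funext p
  have h : p ∈ leftEnds k (IR k f) ↔ 1 ≤ p ∧ p + k - 1 ∈ IR k f := Iff.rfl
  simp only [dmap, move, h]

/-- Each `α_j` moves the units of the left scan beyond its offset. For `j < k` the left scan of the
shifted tail, translated back by `j`, is the left scan beyond `j`. -/
theorem alphaMap_eq_move {k j : ℕ} (hk : 2 ≤ k) (hj : 1 ≤ j) {g : ℕ → ℕ} (hg : g ∈ Freq) :
    ∃ S, LScan k (offset k j) g S ∧
      alphaMap k j g = move g S (rightEnds k (offset k j) S) := by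
  unfold offset alphaMap
  by_cases hjk : j = k
  · simp only [if_pos hjk]
    refine ⟨IL k g, lscan_IL (by omega) hg.2, ?_⟩
    funext p
    unfold alphaTop move
    congr 1
    exact if_congr (by simp [rightEnds]) rfl rfl
  · simp only [if_neg hjk]
    have hfin : (Function.support fun i => g (j + i)).Finite :=
      hg.2.preimage (add_right_injective j).injOn
    have hU := lscan_IL (k := k) (by omega) hfin
    -- An opaque name for the translated scan, so that `p ∈ S` is decided classically throughout.
    obtain ⟨S, hmem⟩ : ∃ S : Set ℕ, ∀ p, p ∈ S ↔ j < p ∧ p - j ∈ IL k fun i => g (j + i) :=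
      ⟨{p | j < p ∧ p - j ∈ IL k fun i => g (j + i)}, fun _ => Iff.rfl⟩
    refine ⟨S, ⟨?_, ?_, ?_⟩, ?_⟩
    · intro s hs
      obtain ⟨h1, h2⟩ := (hmem s).1 hs
      have := (hU.mem _ h2).2
      rw [Nat.add_sub_cancel' h1.le] at this
      exact ⟨h1, this⟩
    · intro s hs t ht hst
      obtain ⟨h1, h2⟩ := (hmem s).1 hs
      obtain ⟨h3, h4⟩ := (hmem t).1 ht
      have := hU.gap _ h2 _ h4 (by omega)
      omega
    · intro p hp hgp
      obtain ⟨s, hs, h1, h2⟩ := hU.cover (p - j) (by omega)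
        (by rwa [Nat.add_sub_cancel' hp.le])
      have := (hU.mem s hs).1
      exact ⟨j + s, (hmem _).2 ⟨by omega, by rwa [Nat.add_sub_cancel_left]⟩, by omega, by omega⟩
    · funext p
      unfold move
      by_cases h1 : p < j
      · have hT : p ∉ rightEnds k j S := by
          rintro (⟨s, hs, h⟩ | ⟨h, -⟩)
          · have := ((hmem s).1 hs).1
            omega
          · omega
        rw [if_pos h1, if_neg hT, if_neg fun h => by have := ((hmem p).1 h).1; omega]
        rfl
      · by_cases h2 : p = j
        · have hT : p ∈ rightEnds k j S :=
            Or.inr ⟨h2, by omega⟩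
          rw [if_neg h1, if_pos h2, if_pos hT, if_neg fun h => by have := ((hmem p).1 h).1; omega, h2]
          rfl
        · rw [if_neg h1, if_neg h2]
          unfold alphaTop
          beta_reduce
          rw [Nat.add_sub_cancel' (by omega : j ≤ p)]
          congr 1
          · congr 1
            refine if_congr ?_ rfl rfl
            rw [hmem]
            exact ⟨fun h => ⟨by omega, h⟩, fun h => h.2⟩
          · refine if_congr ?_ rfl rfl
            constructor
            · rintro ⟨s, hs, h⟩
              have := (hU.mem s hs).1
              exact Or.inl ⟨j + s, (hmem _).2 ⟨by omega, by rwa [Nat.add_sub_cancel_left]⟩, by omega⟩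
            · rintro (⟨s, hs, h⟩ | ⟨h, -⟩)
              · obtain ⟨h3, h4⟩ := (hmem s).1 hs
                exact ⟨s - j, h4, by omega⟩
              · omega

/-- Points of a right scan are `k` apart, so a point below `k` is automatically the least one, and
the only one below `k`. -/
theorem isLeast_IR_iff {k t : ℕ} (hk : 1 ≤ k) {f : ℕ → ℕ} (ht : t < k) :
    IsLeast (IR k f) t ↔ t ∈ IR k f := by
  refine ⟨fun h => h.1, fun h => ⟨h, fun s hs => ?_⟩⟩
  by_contra hlt
  have := (rscan_IR hk f).gap s hs t h (by omega)
  omega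

theorem mem_Aset_iff {k j : ℕ} (hk : 2 ≤ k) (hj : 1 ≤ j) (hjk : j ≤ k) {f : ℕ → ℕ} :
    f ∈ Aset k j ↔ f ∈ Freq ∧ ∀ t, 1 ≤ t → t < k → (t ∈ IR k f ↔ t = offset k j) := by
  unfold Aset offset
  have hleast := fun t (ht : t < k) => isLeast_IR_iff (k := k) (f := f) (by omega) ht
  by_cases h : j = k
  · simp only [if_pos h, Set.mem_sdiff, Set.mem_iUnion, Finset.mem_Ico, Set.mem_ofPred_eq]
    refine and_congr_right fun hf => ⟨fun hn t h1 h2 => ?_, ?_⟩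
    · refine ⟨fun ht => (hn ⟨t, ⟨h1, h2⟩, hf, (hleast t h2).2 ht⟩).elim, fun h => by omega⟩
    · rintro hn ⟨t, ⟨h1, h2⟩, -, ht⟩
      have := (hn t h1 h2).1 ht.1
      omega
  · simp only [if_neg h, Set.mem_ofPred_eq]
    refine and_congr_right fun hf => ⟨fun hl t h1 h2 => ⟨fun ht => ?_, ?_⟩, fun hn => ?_⟩
    · exact ((hleast t h2).2 ht).unique hl
    · rintro rfl
      exact hl.1
    · exact (hleast j (by omega)).2 ((hn j hj (by omega)).2 rfl)

theorem alphaMap_spec {k j : ℕ} (hk : 2 ≤ k) (hj : 1 ≤ j) (hjk : j ≤ k) {g : ℕ → ℕ}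
    (hg : g ∈ Freq) : alphaMap k j g ∈ Aset k j ∧ dmap k (alphaMap k j g) = g := by
  obtain ⟨S, hS, he⟩ := alphaMap_eq_move hk hj hg
  have hc := offset_lt hk hjk
  have hSfin : S.Finite := hg.2.subset fun s hs => (hS.mem s hs).2
  have hTfin : (rightEnds k (offset k j) S).Finite := by
    refine ((hSfin.image fun s => s + k - 1).union (Set.finite_singleton (offset k j))).subset ?_
    rintro p (⟨s, hs, rfl⟩ | ⟨h, -⟩)
    · exact Or.inl ⟨s, hs, rfl⟩
    · exact Or.inr h
  have h0 : 0 ∉ rightEnds k (offset k j) S := by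
    rintro (⟨s, -, h⟩ | ⟨h, h'⟩) <;> omega
  have hF : alphaMap k j g ∈ Freq := he ▸ move_mem_Freq hg hTfin h0
  obtain ⟨b, hb⟩ := exists_bound hF
  have hIR : IR k (alphaMap k j g) = rightEnds k (offset k j) S := by
    rw [he] at hb ⊢
    exact (hS.rscan_move hk hc hb).eq_IR (by omega) hb
  constructor
  · refine (mem_Aset_iff hk hj hjk).2 ⟨hF, fun t h1 h2 => ?_⟩
    rw [hIR]
    constructor
    · rintro (⟨s, hs, h⟩ | ⟨h, -⟩)
      · have := (hS.mem s hs).1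
        omega
      · exact h
    · exact fun h => Or.inr ⟨h, by omega⟩
  · rw [dmap_eq_move, hIR, hS.leftEnds_rightEnds hk hc, he]
    exact move_move (fun s hs => (hS.mem s hs).2) (hS.not_mem_rightEnds hk)

theorem dmap_mem_Freq {k : ℕ} (hk : 2 ≤ k) {f : ℕ → ℕ} (hf : f ∈ Freq) : dmap k f ∈ Freq := by
  rw [dmap_eq_move]
  have hT := rscan_IR (k := k) (by omega) f
  refine move_mem_Freq hf ((Set.finite_Iic (topBound f)).subset ?_) fun h => by
    have := h.1
    omega
  rintro p ⟨hp, h⟩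
  have := (hT.mem _ h).2.1
  exact Set.mem_Iic.2 (by omega)

theorem alphaMap_dmap {k j : ℕ} (hk : 2 ≤ k) (hj : 1 ≤ j) (hjk : j ≤ k) {f : ℕ → ℕ}
    (hf : f ∈ Aset k j) : alphaMap k j (dmap k f) = f := by
  obtain ⟨hF, hc⟩ := (mem_Aset_iff hk hj hjk).1 hf
  have hck := offset_lt hk hjk
  have hT := rscan_IR (k := k) (by omega) f
  obtain ⟨S, hS, he⟩ := alphaMap_eq_move (j := j) hk hj (dmap_mem_Freq hk hF)
  have hS' := hT.lscan_move hk (fun p hp => le_topBound hF.2 hp) hc hck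
  rw [← dmap_eq_move] at hS'
  obtain rfl := hS.unique hS'
  rw [he, hT.rightEnds_leftEnds hk hc hck, dmap_eq_move]
  exact move_move (fun s hs => (hT.mem s hs).2.2) (hT.not_mem_leftEnds hk)

theorem Aset_subset_Freq {k j : ℕ} (hk : 2 ≤ k) (hj : 1 ≤ j) (hjk : j ≤ k) : Aset k j ⊆ Freq :=
  fun _ hf => ((mem_Aset_iff hk hj hjk).1 hf).1

theorem exists_mem_Aset {k : ℕ} (hk : 2 ≤ k) {f : ℕ → ℕ} (hf : f ∈ Freq) :
    ∃ j, 1 ≤ j ∧ j ≤ k ∧ f ∈ Aset k j := by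
  by_cases h : f ∈ Aset k k
  · exact ⟨k, by omega, le_rfl, h⟩
  · have h' : ∃ j, 1 ≤ j ∧ j < k ∧ IsLeast (IR k f) j := by
      simpa [Aset, hf] using h
    obtain ⟨j, h1, h2, h3⟩ := h'
    refine ⟨j, h1, h2.le, ?_⟩
    rw [Aset, if_neg h2.ne]
    exact ⟨hf, h3⟩

theorem Aset_disjoint {k i j : ℕ} (hk : 2 ≤ k) (hi : 1 ≤ i) (hik : i ≤ k) (hj : 1 ≤ j)
    (hjk : j ≤ k) {f : ℕ → ℕ} (hfi : f ∈ Aset k i) (hfj : f ∈ Aset k j) : i = j := by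
  have h1 := ((mem_Aset_iff hk hi hik).1 hfi).2
  have h2 := ((mem_Aset_iff hk hj hjk).1 hfj).2
  have h3 : i < k → i = offset k j := fun h => (h2 i hi h).1 ((h1 i hi h).2 (if_neg h.ne).symm)
  have h4 : j < k → j = offset k i := fun h => (h1 j hj h).1 ((h2 j hj h).2 (if_neg h.ne).symm)
  unfold offset at h3 h4
  split_ifs at h3 h4 <;> omega

theorem statement8 (k : ℕ) (hk : 2 ≤ k) :
    (∀ j, 1 ≤ j → j ≤ k → Set.BijOn (alphaMap k j) Freq (Aset k j)) ∧
    Set.MapsTo (dmap k) Freq Freq ∧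
    Set.SurjOn (dmap k) Freq Freq ∧
    (∀ g ∈ Freq, ∀ j, 1 ≤ j → j ≤ k →
      ∃! f, f ∈ Aset k j ∧ dmap k f = g) ∧
    (∀ g ∈ Freq, {f | f ∈ Freq ∧ dmap k f = g}.ncard = k) ∧
    (∀ j, 1 ≤ j → j ≤ k → ∀ f ∈ Freq, dmap k (alphaMap k j f) = f) ∧
    (∀ j, 1 ≤ j → j ≤ k → ∀ f ∈ Aset k j, alphaMap k j (dmap k f) = f) := by
  have hD : ∀ j, 1 ≤ j → j ≤ k → ∀ f ∈ Freq, dmap k (alphaMap k j f) = f :=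
    fun j h1 h2 f hf => (alphaMap_spec hk h1 h2 hf).2
  have hA : ∀ j, 1 ≤ j → j ≤ k → ∀ f ∈ Aset k j, alphaMap k j (dmap k f) = f :=
    fun j h1 h2 f hf => alphaMap_dmap hk h1 h2 hf
  have hM : ∀ j, 1 ≤ j → j ≤ k → ∀ f ∈ Freq, alphaMap k j f ∈ Aset k j :=
    fun j h1 h2 f hf => (alphaMap_spec hk h1 h2 hf).1
  have hsub := fun j h1 h2 => Aset_subset_Freq (k := k) (j := j) hk h1 h2
  refine ⟨fun j h1 h2 => ?_, fun f hf => dmap_mem_Freq hk hf, fun g hg => ?_,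
    fun g hg j h1 h2 => ?_, fun g hg => ?_, hD, hA⟩
  · exact Set.InvOn.bijOn ⟨hD j h1 h2, hA j h1 h2⟩ (hM j h1 h2)
      fun f hf => dmap_mem_Freq hk (hsub j h1 h2 hf)
  · exact ⟨alphaMap k k g, hsub k (by omega) le_rfl (hM k (by omega) le_rfl g hg),
      hD k (by omega) le_rfl g hg⟩
  · refine ⟨alphaMap k j g, ⟨hM j h1 h2 g hg, hD j h1 h2 g hg⟩, ?_⟩
    rintro f ⟨hf, rfl⟩
    exact (hA j h1 h2 f hf).symm
  · have hfib : {f | f ∈ Freq ∧ dmap k f = g} = (fun j => alphaMap k j g) '' Set.Icc 1 k := by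
      ext f
      constructor
      · rintro ⟨hf, rfl⟩
        obtain ⟨j, h1, h2, hj⟩ := exists_mem_Aset hk hf
        exact ⟨j, ⟨h1, h2⟩, hA j h1 h2 f hj⟩
      · rintro ⟨j, ⟨h1, h2⟩, rfl⟩
        exact ⟨hsub j h1 h2 (hM j h1 h2 g hg), hD j h1 h2 g hg⟩
    have hinj : Set.InjOn (fun j => alphaMap k j g) (Set.Icc 1 k) := by
      rintro i ⟨hi1, hi2⟩ j ⟨hj1, hj2⟩ (hij : alphaMap k i g = alphaMap k j g)
      exact Aset_disjoint hk hi1 hi2 hj1 hj2 (hM i hi1 hi2 g hg) (hij ▸ hM j hj1 hj2 g hg)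
    rw [hfib, hinj.ncard_image, ← Finset.coe_Icc, Set.ncard_coe_finset, Nat.card_Icc]
    omega
end
end

section
/- Let k ≥ 1. For each 1 ≤ j ≤ k+1 the map β_j is a bijection from ℱ^{01} onto ℬ_j. Moreover ∂ : ℱ^{01} → ℱ^{01} is surjective, every fiber of ∂ has exactly k+1 elements (one in each set ℬ_1, …, ℬ_{k+1}), and for each j the restriction of ∂ to ℬ_j is a two-sided inverse of β_j: ∂(β_j(f)) = f for all f ∈ ℱ^{01}, and β_j(∂(f)) = f for all f ∈ ℬ_j. -/
/-!
Both greedy index sets obey a local recursion which determines them. The left scan started at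
`l` is the only set `L` with `p ∈ L ↔ l ≤ p ∧ f p ≠ 0 ∧ (no q ∈ L with q < p < q + k)`
(`IsL`), and the right scan is the only `R` with
`p ∈ R ↔ 1 ≤ p ∧ f p ≠ 0 ∧ (no q ∈ R with p < q < p + k)` (`IsR`). Elements of such a set are
therefore at distance at least `k` from each other.

With the starting point `l = j` for `j ≤ k` and `l = 1` for `j = k + 1`, the map `β_j` is
`f ↦ f - 1_L + 1_{L + k} + (1_{j} if j ≤ k)` (`betaMap_eq`). For `g = β_j f` the set
`(L + k) ∪ ({j} if j ≤ k)` satisfies the recursion of the right scan of `g`: an index `p` of the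
support of `g` outside it is an index of the support of `f` skipped by the left scan, so it is
followed by some `q + k` with `q ∈ L` at distance less than `k`, or it lies below `j ≤ k`. Hence
`∂` undoes `β_j`, and `g ∈ ℬ_j` (`beta_spec`). Conversely, if `f ∈ ℬ_j` has right scan `R`, then
`{p ≥ 1 | p + k ∈ R}` satisfies the recursion of the left scan of `∂ f`, so `β_j` undoes `∂`
(`beta_dmap`). Since `ℱ^{01}` is the disjoint union of `ℬ_1, …, ℬ_{k+1}`, the remaining claims
follow: the fibre of `∂` over `g` is `{β_j g | 1 ≤ j ≤ k + 1}`.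
-/


noncomputable section
open scoped Classical

/-- `ℱ^{01}`: finitely supported `{0,1}`-valued functions on the positive
integers (frequency lists of partitions with distinct parts). -/
def Freq01 : Set (ℕ → ℕ) := {f | f 0 = 0 ∧ (∀ i, f i ≤ 1) ∧ (Function.support f).Finite}

/-- The map `∂` (for the `β`-encoding, with ambient parameter `k`): for every
`i ∈ I^R_k(f)`, decrease the value at `i` by one and, when `i - k ≥ 1`,
increase the value at `i - k` by one. -/
def dmap01 (k : ℕ) (f : ℕ → ℕ) : ℕ → ℕ := fun p =>
  f p - (if p ∈ IR k f then 1 else 0) +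
    (if 1 ≤ p ∧ p + k ∈ IR k f then 1 else 0)

/-- The map `β_{k+1}`: for every `i ∈ I^L_k(f)`, decrease the value at `i` by
one and increase the value at `i + k` by one. -/
def betaTop (k : ℕ) (f : ℕ → ℕ) : ℕ → ℕ := fun p =>
  f p - (if p ∈ IL k f then 1 else 0) +
    (if ∃ i ∈ IL k f, p = i + k then 1 else 0)

/-- The map `β_j` for `1 ≤ j ≤ k + 1` (ambient parameter `k`): for `j = k + 1`
it is `betaTop`; for `j ≤ k` it fixes values at indices `< j` and on indices
`j - 1 + i` (`i ≥ 1`) acts as `β_{k+1}` applied to the shifted tail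
`t ↦ f (j - 1 + t)` with the resulting value at `1` increased by one. -/
def betaMap (k j : ℕ) (f : ℕ → ℕ) : ℕ → ℕ :=
  if j = k + 1 then betaTop k f
  else fun p =>
    if p < j then f p
    else betaTop k (fun t => f (j - 1 + t)) (p - (j - 1)) + (if p = j then 1 else 0)

/-- The class `ℬ_j` (ambient parameter `k`): for `1 ≤ j ≤ k` it consists of the
`f ∈ ℱ^{01}` with `min I^R_k(f) = j`; `ℬ_{k+1}` is the complement in `ℱ^{01}`
of the others. -/
def Bset (k j : ℕ) : Set (ℕ → ℕ) :=
  if j = k + 1 then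
    Freq01 \ ⋃ j' ∈ Finset.Icc 1 k, {f ∈ Freq01 | IsLeast (IR k f) j'}
  else {f ∈ Freq01 | IsLeast (IR k f) j}

/-! ### The greedy scans as local recursions -/

/-- The local recursion of the left-to-right greedy scan of `f` started at `l`. -/
def IsL (k l : ℕ) (f : ℕ → ℕ) (L : Set ℕ) : Prop :=
  ∀ p, p ∈ L ↔ l ≤ p ∧ f p ≠ 0 ∧ ∀ q ∈ L, q < p → q + k ≤ p

/-- The local recursion of the right-to-left greedy scan of `f`. -/
def IsR (k : ℕ) (f : ℕ → ℕ) (R : Set ℕ) : Prop :=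
  ∀ p, p ∈ R ↔ 1 ≤ p ∧ f p ≠ 0 ∧ ∀ q ∈ R, p < q → p + k ≤ q

theorem IsL.unique {k l : ℕ} {f : ℕ → ℕ} {L L' : Set ℕ} (h : IsL k l f L) (h' : IsL k l f L') :
    L = L' := by
  ext p
  induction p using Nat.strong_induction_on with
  | _ p ih =>
    rw [h p, h' p]
    refine and_congr_right fun _ => and_congr_right fun _ => forall_congr' fun q => ?_
    by_cases hq : q < p
    · rw [ih q hq]
    · simp [hq]

theorem IsR.unique {k N : ℕ} {f : ℕ → ℕ} {R R' : Set ℕ} (hN : ∀ p, f p ≠ 0 → p ≤ N)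
    (h : IsR k f R) (h' : IsR k f R') : R = R' := by
  have key : ∀ n p, N < p + n → (p ∈ R ↔ p ∈ R') := by
    intro n
    induction n with
    | zero =>
      intro p hp
      have : ¬ f p ≠ 0 := fun h => by have := hN p h; omega
      rw [h p, h' p]
      simp [this]
    | succ n ih =>
      intro p hp
      rw [h p, h' p]
      refine and_congr_right fun _ => and_congr_right fun _ => forall_congr' fun q => ?_
      by_cases hq : p < q
      · rw [ih q (by omega)]
      · simp [hq]
  ext p
  exact key (N + 1) p (by omega)

theorem ILaux_spec {k : ℕ} (hk : 1 ≤ k) (f : ℕ → ℕ) (fuel : ℕ) :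
    ∀ lb, 1 ≤ lb → (∀ p, f p ≠ 0 → p < lb + fuel) → IsL k lb f (ILaux k f fuel lb) := by
  induction fuel with
  | zero =>
    intro lb _ h p
    simp only [ILaux, Set.mem_empty_iff_false, false_iff]
    rintro ⟨h1, h2, -⟩
    have := h p h2
    omega
  | succ n ih =>
    intro lb hlb h
    by_cases hne : ({j | lb ≤ j ∧ f j ≠ 0} : Set ℕ).Nonempty
    · have hmem := Nat.sInf_mem hne
      have hmin : ∀ p, lb ≤ p → f p ≠ 0 → sInf {j | lb ≤ j ∧ f j ≠ 0} ≤ p :=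
        fun p h1 h2 => Nat.sInf_le ⟨h1, h2⟩
      simp only [ILaux]
      set i := sInf {j | lb ≤ j ∧ f j ≠ 0} with hi
      obtain ⟨hi1, hi2⟩ : lb ≤ i ∧ f i ≠ 0 := hmem
      rw [if_neg (by omega)]
      have IH := ih (i + k) (by omega) (fun p hp => by have := h p hp; omega)
      intro p
      have IHp := IH p
      have hmp := hmin p
      have hge : ∀ q ∈ ILaux k f n (i + k), i + k ≤ q := fun q hq => ((IH q).1 hq).1
      simp only [Set.mem_insert_iff, forall_eq_or_imp]
      constructor
      · rintro (rfl | hp)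
        · exact ⟨hi1, hi2, by omega, fun q hq hlt => by have := hge q hq; omega⟩
        · obtain ⟨a, b, c⟩ := IHp.1 hp
          exact ⟨by omega, b, by omega, c⟩
      · rintro ⟨a, b, c, d⟩
        have := hmp a b
        by_cases hpi : p = i
        · exact Or.inl hpi
        · exact Or.inr (IHp.2 ⟨c (by omega), b, d⟩)
    · rw [Set.not_nonempty_iff_eq_empty] at hne
      simp only [ILaux, hne, Nat.sInf_empty, if_true]
      intro p
      simp only [Set.mem_empty_iff_false, false_iff]
      rintro ⟨h1, h2, -⟩
      have : p ∈ ({j | lb ≤ j ∧ f j ≠ 0} : Set ℕ) := ⟨h1, h2⟩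
      rw [hne] at this
      exact this

theorem IRaux_spec {k : ℕ} (hk : 1 ≤ k) (f : ℕ → ℕ) (fuel : ℕ) :
    ∀ b, b ≤ fuel → ∀ p, p ∈ IRaux k f fuel b ↔
      1 ≤ p ∧ p ≤ b ∧ f p ≠ 0 ∧ ∀ q ∈ IRaux k f fuel b, p < q → p + k ≤ q := by
  induction fuel with
  | zero =>
    intro b hb p
    simp only [IRaux, Set.mem_empty_iff_false, false_iff]
    omega
  | succ n ih =>
    intro b hb
    have hbdd : BddAbove ({j | 1 ≤ j ∧ j ≤ b ∧ f j ≠ 0} : Set ℕ) := ⟨b, fun j hj => hj.2.1⟩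
    have hmax : ∀ p, 1 ≤ p → p ≤ b → f p ≠ 0 → p ≤ sSup {j | 1 ≤ j ∧ j ≤ b ∧ f j ≠ 0} :=
      fun p h1 h2 h3 => le_csSup hbdd ⟨h1, h2, h3⟩
    by_cases hne : ({j | 1 ≤ j ∧ j ≤ b ∧ f j ≠ 0} : Set ℕ).Nonempty
    · have hmem := Nat.sSup_mem hne hbdd
      simp only [IRaux]
      set i := sSup {j | 1 ≤ j ∧ j ≤ b ∧ f j ≠ 0} with hi
      obtain ⟨hi1, hi2, hi3⟩ : 1 ≤ i ∧ i ≤ b ∧ f i ≠ 0 := hmem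
      rw [if_neg (by omega)]
      have IH := ih (i - k) (by omega)
      intro p
      have IHp := IH p
      have hmp := hmax p
      have hle : ∀ q ∈ IRaux k f n (i - k), q ≤ i - k := fun q hq => ((IH q).1 hq).2.1
      simp only [Set.mem_insert_iff, forall_eq_or_imp]
      constructor
      · rintro (rfl | hp)
        · exact ⟨hi1, hi2, hi3, by omega, fun q hq hlt => by have := hle q hq; omega⟩
        · obtain ⟨a, b, c, d⟩ := IHp.1 hp
          exact ⟨by omega, by omega, c, by omega, d⟩
      · rintro ⟨a, b, c, d, e⟩
        have := hmp a b c
        by_cases hpi : p = i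
        · exact Or.inl hpi
        · have := d (by omega)
          exact Or.inr (IHp.2 ⟨a, by omega, c, e⟩)
    · rw [Set.not_nonempty_iff_eq_empty] at hne
      simp only [IRaux, hne, csSup_empty, bot_eq_zero', if_true]
      intro p
      simp only [Set.mem_empty_iff_false, false_iff]
      rintro ⟨h1, h2, h3, -⟩
      have : p ∈ ({j | 1 ≤ j ∧ j ≤ b ∧ f j ≠ 0} : Set ℕ) := ⟨h1, h2, h3⟩
      rw [hne] at this
      exact this

theorem IL_spec {k : ℕ} (hk : 1 ≤ k) {f : ℕ → ℕ} (hf : (Function.support f).Finite) :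
    IsL k 1 f (IL k f) :=
  ILaux_spec hk f _ 1 le_rfl fun p hp => by have := le_topBound hf hp; omega

theorem IR_spec {k : ℕ} (hk : 1 ≤ k) {f : ℕ → ℕ} (hf : (Function.support f).Finite) :
    IsR k f (IR k f) := by
  intro p
  have h := IRaux_spec hk f (topBound f + 1) (topBound f) (by omega) p
  have hp : f p ≠ 0 → p ≤ topBound f := le_topBound hf
  unfold IR
  tauto

theorem IR_eq {k : ℕ} (hk : 1 ≤ k) {f : ℕ → ℕ} (hf : (Function.support f).Finite) {R : Set ℕ}
    (h : IsR k f R) : IR k f = R :=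
  (IR_spec hk hf).unique (fun _ hp => le_topBound hf hp) h

theorem support_finite_of_le {f : ℕ → ℕ} (N : ℕ) (h : ∀ p, f p ≠ 0 → p ≤ N) :
    (Function.support f).Finite :=
  (Set.finite_Iic N).subset fun p hp => h p hp

/-! ### A uniform description of the maps `β_j` and the classes `ℬ_j` -/

/-- The starting point of the left scan used by `β_j`: `j` for `j ≤ k`, and `1` for `j = k + 1`. -/
def startIdx (k j : ℕ) : ℕ := if j ≤ k then j else 1

/-- All the maps `β_j`, `j ≤ k + 1`, have the same shape in terms of a left scan `L` of `f` itself
(for `j ≤ k` this is the scan of the shifted sequence, shifted back). -/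
theorem betaMap_eq {k j : ℕ} (hk : 1 ≤ k) (hj : 1 ≤ j) (hjk : j ≤ k + 1) {f : ℕ → ℕ}
    (hf : (Function.support f).Finite) :
    ∃ L, IsL k (startIdx k j) f L ∧ ∀ p, betaMap k j f p =
      f p - (if p ∈ L then 1 else 0) + (if k ≤ p ∧ p - k ∈ L then 1 else 0) +
        (if p = j ∧ j ≤ k then 1 else 0) := by
  have hex : ∀ (L : Set ℕ) (p : ℕ), (∃ i ∈ L, p = i + k) ↔ (k ≤ p ∧ p - k ∈ L) := by
    intro L p
    constructor
    · rintro ⟨i, hi, rfl⟩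
      simpa using hi
    · rintro ⟨h1, h2⟩
      exact ⟨_, h2, by omega⟩
  by_cases h : j = k + 1
  · refine ⟨IL k f, ?_, fun p => ?_⟩
    · simpa [startIdx, h] using IL_spec hk hf
    · have : ¬ j ≤ k := by omega
      simp only [betaMap, h, if_true, betaTop, hex]
      simp
  · have hg : (Function.support fun t => f (j - 1 + t)).Finite :=
      support_finite_of_le (topBound f) fun p hp => by have := le_topBound hf hp; omega
    have hL := IL_spec hk hg
    set M := IL k (fun t => f (j - 1 + t)) with hM
    have hjk' : j ≤ k := by omega
    refine ⟨{p | j ≤ p ∧ p - (j - 1) ∈ M}, ?_, fun p => ?_⟩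
    · intro p
      simp only [startIdx, hjk', if_true, Set.mem_ofPred_eq]
      refine and_congr_right fun hp => ?_
      rw [hL]
      have e : j - 1 + (p - (j - 1)) = p := by omega
      simp only [e]
      constructor
      · rintro ⟨-, b, c⟩
        refine ⟨b, fun q hq hqp => ?_⟩
        have := c _ hq.2 (by omega)
        omega
      · rintro ⟨b, c⟩
        refine ⟨by omega, b, fun q hq hqp => ?_⟩
        have hq1 : 1 ≤ q := ((hL q).1 hq).1
        have := c (q + (j - 1)) ⟨by omega, by simpa using hq⟩ (by omega)
        omega
    · have hM1 : ∀ q ∈ M, 1 ≤ q := fun q hq => ((hL q).1 hq).1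
      simp only [betaMap, h, if_false, betaTop, hex, ← hM, Set.mem_ofPred_eq, hjk', and_true]
      by_cases hp : p < j
      · have h1 : ¬ j ≤ p := by omega
        have h2 : ¬ j ≤ p - k := by omega
        have h3 : p ≠ j := by omega
        simp [hp, h1, h2, h3]
      · have e : j - 1 + (p - (j - 1)) = p := by omega
        have h1 : j ≤ p := by omega
        have h2 : (k ≤ p - (j - 1) ∧ p - (j - 1) - k ∈ M) ↔
            (k ≤ p ∧ j ≤ p - k ∧ p - k - (j - 1) ∈ M) := by
          have e2 : p - k - (j - 1) = p - (j - 1) - k := by omega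
          rw [e2]
          constructor
          · rintro ⟨a, b⟩
            have := hM1 _ b
            exact ⟨by omega, by omega, b⟩
          · rintro ⟨a, b, c⟩
            exact ⟨by omega, c⟩
        simp only [hp, if_false, e, h2, h1, true_and]
        congr!

theorem mem_Bset_iff {k j : ℕ} (hk : 1 ≤ k) (hjk : j ≤ k + 1) {f : ℕ → ℕ} :
    f ∈ Bset k j ↔ f ∈ Freq01 ∧ (j ≤ k → IsLeast (IR k f) j) ∧
      (¬ j ≤ k → ∀ p ∈ IR k f, k < p) := by
  unfold Bset
  by_cases h : j = k + 1
  · have h' : ¬ j ≤ k := by omega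
    simp only [h, if_true, Set.mem_sdiff, Set.mem_iUnion, Finset.mem_Icc, Set.mem_ofPred_eq]
    refine and_congr_right fun hf => ?_
    constructor
    · refine fun hno => ⟨fun _ => by omega, fun _ p hp => ?_⟩
      by_contra hpk
      have hR := IR_spec hk hf.2.2
      have hm := Nat.sInf_mem ⟨p, hp⟩
      have hle := Nat.sInf_le hp
      exact hno ⟨sInf (IR k f), ⟨((hR _).1 hm).1, by omega⟩, hf, hm, fun q hq => Nat.sInf_le hq⟩
    · rintro ⟨-, hall⟩ ⟨i, ⟨_, hi⟩, -, hl⟩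
      have := hall (by omega) i hl.1
      omega
  · have h' : j ≤ k := by omega
    simp [h, h']

/-- A skipped index of the support is closely followed by an index of the right scan. -/
theorem IsR.exists_of_notMem {k : ℕ} {f : ℕ → ℕ} {R : Set ℕ} (h : IsR k f R) {p : ℕ}
    (hp : 1 ≤ p) (hfp : f p ≠ 0) (hpR : p ∉ R) : ∃ q ∈ R, p < q ∧ q < p + k := by
  by_contra hno
  push Not at hno
  exact hpR ((h p).2 ⟨hp, hfp, hno⟩)

/-- A skipped index of the support is closely preceded by an index of the left scan. -/
theorem IsL.exists_of_notMem {k l : ℕ} {f : ℕ → ℕ} {L : Set ℕ} (h : IsL k l f L) {p : ℕ}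
    (hp : l ≤ p) (hfp : f p ≠ 0) (hpL : p ∉ L) : ∃ q ∈ L, q < p ∧ p < q + k := by
  by_contra hno
  push Not at hno
  exact hpL ((h p).2 ⟨hp, hfp, hno⟩)

/-! ### The maps `∂` and `β_j` are mutually inverse -/

theorem dmap_mem {k : ℕ} (hk : 1 ≤ k) {f : ℕ → ℕ} (hf : f ∈ Freq01) : dmap01 k f ∈ Freq01 := by
  obtain ⟨h0, h1, hfin⟩ := hf
  have hR := IR_spec hk hfin
  refine ⟨by simp [dmap01, h0], fun p => ?_, support_finite_of_le (topBound f) fun p hp => ?_⟩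
  · have := h1 p
    unfold dmap01
    by_cases ha : 1 ≤ p ∧ p + k ∈ IR k f
    -- If `f p = 1` and `p + k` is selected, then so is `p`, since no index strictly between is.
    · by_cases hb : p ∈ IR k f
      · simp only [ha, hb, and_self, if_true]; omega
      · by_cases hc : f p = 0
        · simp [hc, hb, ha]
        · obtain ⟨q, hq, h2, h3⟩ := hR.exists_of_notMem ha.1 hc hb
          have := ((hR q).1 hq).2.2 _ ha.2 h3
          omega
    · simp only [ha, if_false]; omega
  · unfold dmap01 at hp
    by_cases ha : 1 ≤ p ∧ p + k ∈ IR k f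
    · have := le_topBound hfin ((hR _).1 ha.2).2.1
      omega
    · simp only [ha, if_false] at hp
      exact le_topBound hfin (by omega)

/-- `β_j` maps into `ℬ_j`, and `∂` undoes it: the right scan of `β_j f` is the left scan of `f`
translated by `k`, together with `j` when `j ≤ k`. -/
theorem beta_spec {k j : ℕ} (hk : 1 ≤ k) (hj : 1 ≤ j) (hjk : j ≤ k + 1) {f : ℕ → ℕ}
    (hf : f ∈ Freq01) : betaMap k j f ∈ Bset k j ∧ dmap01 k (betaMap k j f) = f := by
  obtain ⟨h0, h1, hfin⟩ := hf
  obtain ⟨L, hL, hb⟩ := betaMap_eq hk hj hjk hfin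
  set g := betaMap k j f with hg
  have hl1 : 1 ≤ startIdx k j := by unfold startIdx; split_ifs <;> omega
  have hlj : j ≤ k → startIdx k j = j := fun h => by simp [startIdx, h]
  have hlk : ¬ j ≤ k → startIdx k j = 1 := fun h => by simp [startIdx, h]
  have hLl : ∀ q ∈ L, startIdx k j ≤ q := fun q hq => ((hL q).1 hq).1
  have hLf : ∀ q ∈ L, f q = 1 := fun q hq => by
    have := ((hL q).1 hq).2.1
    have := h1 q
    omega
  have hLs : ∀ p ∈ L, ∀ q ∈ L, q < p → q + k ≤ p := fun p hp => ((hL p).1 hp).2.2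
  set R : Set ℕ := {p | (k ≤ p ∧ p - k ∈ L) ∨ (p = j ∧ j ≤ k)} with hRdef
  have hmem : ∀ p, p ∈ R ↔ (k ≤ p ∧ p - k ∈ L) ∨ (p = j ∧ j ≤ k) := fun p => Iff.rfl
  -- The two kinds of elements of `R` exclude each other, so at most one unit is added anywhere.
  have hgR : ∀ p, g p = f p - (if p ∈ L then 1 else 0) + (if p ∈ R then 1 else 0) := by
    intro p
    rw [hb p]
    by_cases ha : k ≤ p ∧ p - k ∈ L
    · have hn : ¬ (p = j ∧ j ≤ k) := by
        rintro ⟨rfl, h⟩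
        have := hLl _ ha.2
        have := hlj h
        omega
      simp only [hmem, ha, hn, and_self, true_or, if_true, if_false]
    · simp only [hmem, ha, if_false, false_or]
      omega
  have hg01 : ∀ p, g p ≤ 1 := by
    intro p
    rw [hgR p]
    have hp1 := h1 p
    by_cases hpR : p ∈ R
    · by_cases hpL : p ∈ L
      · simp only [hpL, hpR, if_true]; omega
      · by_cases hfp : f p = 0
        · simp [hfp, hpR, hpL]
        · exfalso
          rcases (hmem p).1 hpR with ⟨a, b⟩ | ⟨a, b⟩
          · have := hLl _ b
            obtain ⟨q, hq, h2, h3⟩ := hL.exists_of_notMem (by omega) hfp hpL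
            rcases lt_trichotomy q (p - k) with h | h | h
            · have := hLs _ b _ hq h; omega
            · omega
            · have := hLs _ hq _ b h; omega
          · have e := hlj b
            obtain ⟨q, hq, h2, h3⟩ := hL.exists_of_notMem (by omega) hfp hpL
            have := hLl _ hq
            omega
    · simp only [hpR, if_false]; omega
  have hgfin : (Function.support g).Finite := by
    refine support_finite_of_le (topBound f + k) fun p hp => ?_
    rw [hgR p] at hp
    by_cases hpR : p ∈ R
    · rcases (hmem p).1 hpR with ⟨a, b⟩ | ⟨a, b⟩
      · have := le_topBound hfin (p := p - k) (by rw [hLf _ b]; omega)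
        omega
      · omega
    · simp only [hpR, if_false] at hp
      have := le_topBound hfin (p := p) (by omega)
      omega
  have hR1 : ∀ p ∈ R, 1 ≤ p := by
    intro p hp
    rcases (hmem p).1 hp with ⟨a, b⟩ | ⟨a, b⟩ <;> omega
  have hIsR : IsR k g R := by
    intro p
    constructor
    · intro hp
      refine ⟨hR1 p hp, ?_, ?_⟩
      · rw [hgR p, if_pos hp]; omega
      · intro q hq hpq
        rcases (hmem p).1 hp with ⟨a, b⟩ | ⟨a, b⟩ <;> rcases (hmem q).1 hq with ⟨c, d⟩ | ⟨c, d⟩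
        · have := hLs _ d _ b (by omega); omega
        · have := hLl _ b
          have := hlj d
          omega
        · have := hLl _ d
          have := hlj b
          omega
        · omega
    · rintro ⟨hp1, hgp, hno⟩
      by_contra hpR
      rw [hgR p] at hgp
      simp only [hpR, if_false] at hgp
      have hpL : p ∉ L := by
        intro hpL
        have := h1 p
        simp only [hpL, if_true] at hgp
        omega
      simp only [hpL, if_false] at hgp
      by_cases hlp : startIdx k j ≤ p
      · obtain ⟨q, hq, h2, h3⟩ := hL.exists_of_notMem hlp (by omega) hpL
        have := hno (q + k) ((hmem _).2 (Or.inl ⟨by omega, by simpa using hq⟩)) (by omega)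
        omega
      · by_cases hjk' : j ≤ k
        · have := hlj hjk'
          have := hno j ((hmem _).2 (Or.inr ⟨rfl, hjk'⟩)) (by omega)
          omega
        · have := hlk hjk'
          omega
  have hIR : IR k g = R := IR_eq hk hgfin hIsR
  refine ⟨(mem_Bset_iff hk hjk).2 ⟨⟨?_, hg01, hgfin⟩, ?_, ?_⟩, ?_⟩
  · have h0L : 0 ∉ L := fun h => by have := hLl _ h; omega
    have h0R : 0 ∉ R := fun h => by have := hR1 _ h; omega
    rw [hgR 0]
    simp [h0, h0R]
  · intro hjk'
    rw [hIR]
    refine ⟨(hmem _).2 (Or.inr ⟨rfl, hjk'⟩), fun q hq => ?_⟩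
    rcases (hmem q).1 hq with ⟨c, d⟩ | ⟨c, d⟩
    · have := hLl _ d
      have := hlj hjk'
      omega
    · omega
  · intro hjk' p hp
    rw [hIR] at hp
    rcases (hmem p).1 hp with ⟨c, d⟩ | ⟨c, d⟩
    · have := hLl _ d
      omega
    · omega
  · funext p
    have hiff : (1 ≤ p ∧ p + k ∈ R) ↔ p ∈ L := by
      rw [hmem]
      constructor
      · rintro ⟨a, ⟨b, c⟩ | ⟨b, c⟩⟩
        · simpa using c
        · omega
      · intro h
        have := hLl _ h
        exact ⟨by omega, Or.inl ⟨by omega, by simpa using h⟩⟩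
    unfold dmap01
    rw [hIR, hgR p]
    simp only [hiff]
    by_cases hpL : p ∈ L
    · have := hLf p hpL
      by_cases hpR : p ∈ R <;> simp [hpL, hpR, this]
    · by_cases hpR : p ∈ R <;> simp [hpL, hpR]

/-- `β_j` undoes `∂` on `ℬ_j`: the left scan of `∂ f` is the right scan of `f` translated by
`-k`, with the indices that become nonpositive dropped. -/
theorem beta_dmap {k j : ℕ} (hk : 1 ≤ k) (hj : 1 ≤ j) (hjk : j ≤ k + 1) {f : ℕ → ℕ}
    (hf : f ∈ Bset k j) : betaMap k j (dmap01 k f) = f := by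
  obtain ⟨hF, hle, hgt⟩ := (mem_Bset_iff hk hjk).1 hf
  have hdfin := (dmap_mem hk hF).2.2
  obtain ⟨h0, h1, hfin⟩ := hF
  have hR := IR_spec hk hfin
  obtain ⟨L, hL, hb⟩ := betaMap_eq hk hj hjk hdfin
  have hdp : ∀ p, dmap01 k f p = f p - (if p ∈ IR k f then 1 else 0) +
    (if 1 ≤ p ∧ p + k ∈ IR k f then 1 else 0) := fun p => rfl
  set d := dmap01 k f with hd
  set R := IR k f with hRdef
  have hl1 : 1 ≤ startIdx k j := by unfold startIdx; split_ifs <;> omega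
  have hlj : j ≤ k → startIdx k j = j := fun h => by simp [startIdx, h]
  have hRs : ∀ p ∈ R, ∀ q ∈ R, p < q → p + k ≤ q := fun p hp => ((hR p).1 hp).2.2
  have hRf : ∀ p ∈ R, f p = 1 := fun q hq => by
    have := ((hR q).1 hq).2.1
    have := h1 q
    omega
  -- Apart from the least element `j` in the case `j ≤ k`, everything in `R` exceeds `k`
  -- by at least the starting point.
  have hbig : ∀ q ∈ R, (q = j ∧ j ≤ k) ∨ startIdx k j + k ≤ q := by
    intro q hq
    by_cases hjk' : j ≤ k
    · have hl := hle hjk'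
      have hjq : j ≤ q := hl.2 hq
      rcases eq_or_lt_of_le hjq with h | h
      · exact Or.inl ⟨h.symm, hjk'⟩
      · have := hRs _ hl.1 _ hq h
        have := hlj hjk'
        exact Or.inr (by omega)
    · have := hgt hjk' q hq
      have : startIdx k j = 1 := by simp [startIdx, hjk']
      exact Or.inr (by omega)
  have hIsL : IsL k (startIdx k j) d {p | 1 ≤ p ∧ p + k ∈ R} := by
    intro p
    simp only [Set.mem_ofPred_eq]
    constructor
    · intro hp
      refine ⟨?_, ?_, ?_⟩
      · rcases hbig _ hp.2 with h | h <;> omega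
      · rw [hdp, if_pos hp]; omega
      · intro q hq hqp
        have := hRs _ hq.2 _ hp.2 (by omega)
        omega
    · rintro ⟨a, b, c⟩
      by_contra hno
      rw [hdp, if_neg hno] at b
      have hpR : p ∉ R := by
        intro h
        have := hRf p h
        simp [h, this] at b
      simp only [hpR, if_false] at b
      obtain ⟨q, hq, h2, h3⟩ := hR.exists_of_notMem (by omega) (by omega) hpR
      have hq' : startIdx k j + k ≤ q := by
        rcases hbig q hq with ⟨h, h'⟩ | h
        · have := hlj h'
          omega
        · exact h
      have e : q - k + k = q := by omega
      have := c (q - k) ⟨by omega, by rwa [e]⟩ (by omega)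
      omega
  have hLeq : L = {p | 1 ≤ p ∧ p + k ∈ R} := hL.unique hIsL
  funext p
  have hmemL : ∀ q, q ∈ L ↔ 1 ≤ q ∧ q + k ∈ R := fun q => by rw [hLeq]; rfl
  have hLp : (if 1 ≤ p ∧ p + k ∈ R then 1 else 0) = (if p ∈ L then 1 else 0) :=
    if_congr (hmemL p).symm rfl rfl
  rw [hb p, hdp p, hLp]
  have hiff : p ∈ R ↔ (k ≤ p ∧ p - k ∈ L) ∨ (p = j ∧ j ≤ k) := by
    rw [hmemL]
    constructor
    · intro hp
      rcases hbig p hp with h | h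
      · exact Or.inr h
      · have e : p - k + k = p := by omega
        exact Or.inl ⟨by omega, by omega, by rwa [e]⟩
    · rintro (⟨a, b, c⟩ | ⟨a, b⟩)
      · have e : p - k + k = p := by omega
        rwa [e] at c
      · rw [a]; exact (hle b).1
  by_cases hpR : p ∈ R
  · have hfp := hRf p hpR
    rcases hiff.1 hpR with h | h
    · have hn : ¬ (p = j ∧ j ≤ k) := by
        rintro ⟨e, e'⟩
        have := ((hmemL _).1 h.2).1
        omega
      rw [if_pos hpR, if_pos h, if_neg hn, hfp]
      omega
    · have hn : ¬ (k ≤ p ∧ p - k ∈ L) := by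
        rintro ⟨e, e'⟩
        have := ((hmemL _).1 e').1
        omega
      rw [if_pos hpR, if_neg hn, if_pos h, hfp]
      omega
  · have h2 : ¬ (k ≤ p ∧ p - k ∈ L) := fun h => hpR (hiff.2 (Or.inl h))
    have h3 : ¬ (p = j ∧ j ≤ k) := fun h => hpR (hiff.2 (Or.inr h))
    rw [if_neg hpR, if_neg h2, if_neg h3]
    omega

/-! ### The classes `ℬ_j` partition `ℱ^{01}` -/

theorem Bset_disjoint {k i j : ℕ} (hk : 1 ≤ k) (hik : i ≤ k + 1) (hjk : j ≤ k + 1) {f : ℕ → ℕ}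
    (hi : f ∈ Bset k i) (hj : f ∈ Bset k j) : i = j := by
  obtain ⟨-, a, b⟩ := (mem_Bset_iff hk hik).1 hi
  obtain ⟨-, c, d⟩ := (mem_Bset_iff hk hjk).1 hj
  by_cases h1 : i ≤ k <;> by_cases h2 : j ≤ k
  · exact (a h1).unique (c h2)
  · have := d h2 i (a h1).1
    omega
  · have := b h1 j (c h2).1
    omega
  · omega

theorem exists_mem_Bset {k : ℕ} (hk : 1 ≤ k) {f : ℕ → ℕ} (hf : f ∈ Freq01) :
    ∃ j, 1 ≤ j ∧ j ≤ k + 1 ∧ f ∈ Bset k j := by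
  by_cases h : ∃ j, (1 ≤ j ∧ j ≤ k) ∧ IsLeast (IR k f) j
  · obtain ⟨j, ⟨h1, h2⟩, h3⟩ := h
    exact ⟨j, h1, by omega, (mem_Bset_iff hk (by omega)).2 ⟨hf, fun _ => h3, fun h => by omega⟩⟩
  · refine ⟨k + 1, by omega, le_rfl, ?_⟩
    simp only [Bset, if_true, Set.mem_sdiff, Set.mem_iUnion, Finset.mem_Icc, Set.mem_ofPred_eq]
    exact ⟨hf, fun ⟨j, hj, _, hl⟩ => h ⟨j, hj, hl⟩⟩

theorem statement10 (k : ℕ) (hk : 1 ≤ k) :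
    (∀ j, 1 ≤ j → j ≤ k + 1 → Set.BijOn (betaMap k j) Freq01 (Bset k j)) ∧
    Set.MapsTo (dmap01 k) Freq01 Freq01 ∧
    Set.SurjOn (dmap01 k) Freq01 Freq01 ∧
    (∀ g ∈ Freq01, ∀ j, 1 ≤ j → j ≤ k + 1 →
      ∃! f, f ∈ Bset k j ∧ dmap01 k f = g) ∧
    (∀ g ∈ Freq01, {f | f ∈ Freq01 ∧ dmap01 k f = g}.ncard = k + 1) ∧
    (∀ j, 1 ≤ j → j ≤ k + 1 → ∀ f ∈ Freq01, dmap01 k (betaMap k j f) = f) ∧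
    (∀ j, 1 ≤ j → j ≤ k + 1 → ∀ f ∈ Bset k j, betaMap k j (dmap01 k f) = f) := by
  have hBF : ∀ j, j ≤ k + 1 → ∀ f ∈ Bset k j, f ∈ Freq01 :=
    fun j hj f hf => ((mem_Bset_iff hk hj).1 hf).1
  refine ⟨fun j h1 h2 => ?_, fun f hf => dmap_mem hk hf, fun g hg => ?_, fun g hg j h1 h2 => ?_,
    fun g hg => ?_, fun j h1 h2 f hf => (beta_spec hk h1 h2 hf).2,
    fun j h1 h2 f hf => beta_dmap hk h1 h2 hf⟩
  · exact Set.BijOn.mk (fun f hf => (beta_spec hk h1 h2 hf).1)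
      (Set.LeftInvOn.injOn (f₁' := dmap01 k) fun f hf => (beta_spec hk h1 h2 hf).2)
      (fun f hf => ⟨dmap01 k f, dmap_mem hk (hBF j h2 f hf), beta_dmap hk h1 h2 hf⟩)
  · have h := beta_spec hk le_rfl (by omega) hg
    exact ⟨_, hBF 1 (by omega) _ h.1, h.2⟩
  · refine ⟨betaMap k j g, beta_spec hk h1 h2 hg, ?_⟩
    rintro f ⟨hf, rfl⟩
    exact (beta_dmap hk h1 h2 hf).symm
  · have himg : {f | f ∈ Freq01 ∧ dmap01 k f = g} =
        (fun j => betaMap k j g) '' (Finset.Icc 1 (k + 1) : Finset ℕ) := by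
      ext f
      simp only [Set.mem_ofPred_eq, Set.mem_image, Finset.mem_coe, Finset.mem_Icc]
      constructor
      · rintro ⟨hf, rfl⟩
        obtain ⟨j, h1, h2, h3⟩ := exists_mem_Bset hk hf
        exact ⟨j, ⟨h1, h2⟩, beta_dmap hk h1 h2 h3⟩
      · rintro ⟨j, ⟨h1, h2⟩, rfl⟩
        have h := beta_spec hk h1 h2 hg
        exact ⟨hBF j h2 _ h.1, h.2⟩
    rw [himg, Set.InjOn.ncard_image, Set.ncard_coe_finset, Nat.card_Icc]
    · omega
    · intro i hi j hj hij
      simp only [Finset.mem_coe, Finset.mem_Icc] at hi hj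
      refine Bset_disjoint (f := betaMap k i g) hk hi.2 hj.2 (beta_spec hk hi.1 hi.2 hg).1 ?_
      have hij' : betaMap k i g = betaMap k j g := hij
      rw [hij']
      exact (beta_spec hk hj.1 hj.2 hg).1
end
end

section
/- Fix integers r ≥ 1 and 0 ≤ s < r. Then, as an identity of formal power series in the variables q, z, u_2, …, u_r over ℤ: Σ_{c=(c_2,…,c_r)} Σ_{w ∈ R̄(c)} q^{maj_s(w)} z^{des_s(w)} u_2^{c_2} ⋯ u_r^{c_r} = (z; q)_∞ · Σ_{n≥0} z^n · ∏_{j=r−s+1}^{r} (−q u_j; q)_n / ( (q;q)_n · ∏_{i=2}^{r−s} (q u_i; q)_n ), where the outer sum on the left is over all tuples of nonnegative integers c = (c_2,…,c_r). -/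
/-!
A word `w` ending in a single `1` stands for the infinite word `w 1 1 1 ⋯`. Divide the left-hand
side by `(z; q)_∞`: by Euler's identity `1 / (z; q)_∞ = ∑ z ^ m / (q; q)_m` (`euler`), the
coefficient of `z ^ n` becomes
`tot n = ∑_w q ^ maj(w) u ^ c(w) / (q; q)_{n - des(w)}`, the sum being over words with
`des(w) ≤ n`. It remains to show (`tot_eq`) that `tot n` is the product on the right-hand side,
which follows from `tot 0 = 1` and the recursion (`tot_rec`)
`tot (n + 1) * ∏_{x small} (1 - u_x q ^ (n + 1)) = tot n * ∏_{x large} (1 + u_x q ^ (n + 1))`,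
where `u_1 = 1`.

For the recursion, let `D_x` be the part of `tot (n + 1) - tot n` that comes from the words
starting with `x`. Deleting the first letter of an infinite word is a bijection from the words
starting with `x` to all words; it lowers `des` by `δ`, which is `1` if there is a descent at
position `1` and `0` otherwise, and lowers `maj` by the original value of `des`. Since
`1 / (q; q)_m - 1 / (q; q)_{m-1} = q ^ m / (q; q)_m`, the powers of `q` recombine to give
(`dif_eq`) `D_x = u_x q ^ (n + 1) * (tot n + ∑_y D_y)`, with `y` running over the letters such
that `x y` is not a descent, i.e. `y ≥ x` for small `x` and `y > x` for large `x`. This triangular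
linear system is solved from `x = r` down to `x = 1` (`triangular`).

All interchanges of sums are justified because, for each `N`, only finitely many words satisfy
`maj(w) ≤ N` (`finite_sMaj_le`).
-/

/-- `w` is a word on the alphabet `{1, …, r}` (the letter `i` stands for `xᵢ`,
with the natural order `x₁ < x₂ < ⋯ < x_r`). -/
def IsWordOn (r : ℕ) (w : List ℕ) : Prop := ∀ x ∈ w, 1 ≤ x ∧ x ≤ r

/-- `w` ends with a single occurrence of the letter `a`. -/
def EndsInSingle (a : ℕ) (w : List ℕ) : Prop :=
  w ≠ [] ∧ w.getLast? = some a ∧ (1 < w.length → w.getD (w.length - 2) 0 ≠ a)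

/-- The set of `s`-descents of the word `w = w₁ ⋯ wₙ` on the alphabet `{1, …, r}`:
1-indexed positions `i ≤ n` such that either `i < n` and `wᵢ > wᵢ₊₁`, or `i < n`
and `wᵢ = wᵢ₊₁` with `wᵢ` `s`-large (a letter `x_j` is `s`-large iff `j > r - s`),
or `i = n` and `wₙ` is `s`-large. Here `wᵢ = w.getD (i-1) 0`. -/
def sDesSet (r s : ℕ) (w : List ℕ) : Finset ℕ :=
  (Finset.Icc 1 w.length).filter (fun i =>
    (i < w.length ∧ (w.getD i 0 < w.getD (i - 1) 0 ∨
        (w.getD (i - 1) 0 = w.getD i 0 ∧ r - s < w.getD (i - 1) 0))) ∨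
    (i = w.length ∧ r - s < w.getD (i - 1) 0))

/-- The number of `s`-descents of `w`. -/
def sDes (r s : ℕ) (w : List ℕ) : ℕ := (sDesSet r s w).card

/-- The `s`-major index: sum of the `s`-descent positions of `w`. -/
def sMaj (r s : ℕ) (w : List ℕ) : ℕ := ∑ i ∈ sDesSet r s w, i

noncomputable section

/-- Formal power series over `ℤ` in countably many variables; we use
variable `0` as `q`, variable `1` as `z`, and variable `j` as `u_j` for `2 ≤ j ≤ r`. -/
abbrev R3 : Type := MvPowerSeries ℕ ℤ

/-- The product (coefficientwise) topology on formal power series, with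
discrete topology on the coefficients: convergence is coefficientwise. -/
instance : TopologicalSpace R3 :=
  inferInstanceAs (TopologicalSpace ((ℕ →₀ ℕ) → ℤ))

def q3 : R3 := MvPowerSeries.X 0
def z3 : R3 := MvPowerSeries.X 1
/-- The variable `u_j`. -/
def u3 (j : ℕ) : R3 := MvPowerSeries.X j

/-- The finite q-Pochhammer symbol `(a; b)_n = ∏_{i=0}^{n-1} (1 - a bⁱ)`. -/
def poch (a b : R3) (n : ℕ) : R3 := ∏ i ∈ Finset.range n, (1 - a * b ^ i)

/-- The infinite q-Pochhammer symbol `(a; b)_∞ = ∏_{i≥0} (1 - a bⁱ)`. -/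
def pochInf (a b : R3) : R3 := ∏' i : ℕ, (1 - a * b ^ i)

/-! ### Convergence of formal power series, and Euler's identity -/

instance : T2Space R3 := inferInstanceAs (T2Space ((ℕ →₀ ℕ) → ℤ))

instance : IsTopologicalRing R3 :=
  MvPowerSeries.WithPiTopology.instIsTopologicalRing ℕ ℤ

lemma tendsto_iff_coeff' {ι : Type*} {f : ι → R3} {l : Filter ι} {g : R3} :
    Filter.Tendsto f l (nhds g) ↔ ∀ d : ℕ →₀ ℕ,
      Filter.Tendsto (fun i => MvPowerSeries.coeff d (f i)) l
        (nhds (MvPowerSeries.coeff d g)) :=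
  MvPowerSeries.WithPiTopology.tendsto_iff_coeff_tendsto f l g

lemma summable_of_coeff {ι : Type*} {f : ι → R3}
    (h : ∀ d : ℕ →₀ ℕ, {i | MvPowerSeries.coeff d (f i) ≠ 0}.Finite) : Summable f := by
  refine MvPowerSeries.WithPiTopology.summable_iff_summable_coeff.2 fun d => ?_
  exact summable_of_hasFiniteSupport (h d)

/-- A family is summable if its `i`-th member is divisible by `q ^ a i` and by `z ^ b i`, and only
finitely many `i` have `a i` and `b i` below any given bounds. -/
lemma summable_of_dvd {ι : Type*} {f : ι → R3} (a b : ι → ℕ)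
    (hfin : ∀ A B : ℕ, {i | a i ≤ A ∧ b i ≤ B}.Finite)
    (ha : ∀ i, q3 ^ a i ∣ f i) (hb : ∀ i, z3 ^ b i ∣ f i) : Summable f := by
  refine summable_of_coeff fun d => (hfin (d 0) (d 1)).subset fun i hi => ?_
  constructor
  · by_contra hlt
    exact hi (MvPowerSeries.X_pow_dvd_iff.1 (ha i) d (not_le.1 hlt))
  · by_contra hlt
    exact hi (MvPowerSeries.X_pow_dvd_iff.1 (hb i) d (not_le.1 hlt))

lemma isUnit_poch (a : R3) (ha : MvPowerSeries.constantCoeff a = 0) (n : ℕ) :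
    IsUnit (poch a q3 n) := by
  rw [MvPowerSeries.isUnit_iff_constantCoeff]
  simp [poch, ha]

lemma poch_succ (a b : R3) (n : ℕ) : poch a b (n + 1) = poch a b n * (1 - a * b ^ n) :=
  Finset.prod_range_succ _ _

/-- The coefficient `1 / (q; q)_m` of `z ^ m` in `1 / (z; q)_∞`. -/
def eCoef (m : ℕ) : R3 := Ring.inverse (poch q3 q3 m)

lemma eCoef_mul (m : ℕ) : eCoef m * poch q3 q3 m = 1 :=
  Ring.inverse_mul_cancel _ (isUnit_poch _ (by simp [q3]) m)

lemma eCoef_zero : eCoef 0 = 1 := by simp [eCoef, poch]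

lemma eCoef_succ (m : ℕ) : eCoef (m + 1) - eCoef m = q3 ^ (m + 1) * eCoef (m + 1) := by
  have h := eCoef_mul m
  have h' := eCoef_mul (m + 1)
  rw [poch_succ] at h'
  linear_combination eCoef m * h' - (1 - q3 * q3 ^ m) * eCoef (m + 1) * h

lemma summable_z_mul (f : ℕ → R3) : Summable fun n => z3 ^ n * f n :=
  summable_of_dvd (fun _ => 0) id (fun _ B => (Set.finite_Iic B).subset fun _ h => h.2)
    (fun _ => by simp) (fun _ => Dvd.intro _ rfl)

lemma multipliable_poch : Multipliable fun i : ℕ => (1 - z3 * q3 ^ i : R3) := by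
  have := MvPowerSeries.WithPiTopology.multipliable_one_add_of_tendsto_order_atTop_nhds_top
    (R := ℤ) (σ := ℕ) (f := fun i : ℕ => (-(z3 * q3 ^ i) : R3)) ?_
  · simp only [← sub_eq_add_neg] at this
    exact this
  · rw [ENat.tendsto_nhds_top_iff_natCast_lt]
    intro N
    filter_upwards [Filter.eventually_gt_atTop N] with i hi
    refine lt_of_lt_of_le (b := ((i : ℕ) : ℕ∞)) (by exact_mod_cast hi) ?_
    apply MvPowerSeries.nat_le_order
    intro d hd
    have hdvd : q3 ^ i ∣ -(z3 * q3 ^ i) := (Dvd.intro_left _ rfl).neg_right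
    refine MvPowerSeries.X_pow_dvd_iff.1 hdvd d (lt_of_le_of_lt ?_ hd)
    exact Finsupp.le_degree 0 d

/-- The series `H(z q ^ k) = ∑ₘ z ^ m q ^ (k m) / (q; q)_m`, where
`H(z) = ∑ₘ z ^ m / (q; q)_m`. -/
def eSer (k : ℕ) : R3 := ∑' m : ℕ, z3 ^ m * (q3 ^ (k * m) * eCoef m)

lemma eSer_eq (k : ℕ) :
    eSer k = 1 + ∑' m : ℕ, z3 ^ (m + 1) * (q3 ^ (k * (m + 1)) * eCoef (m + 1)) := by
  rw [eSer, (summable_z_mul _).tsum_eq_zero_add]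
  simp [eCoef_zero]

lemma summable_z_succ_mul (f : ℕ → R3) : Summable fun n => z3 ^ (n + 1) * f n := by
  simpa only [pow_succ', mul_assoc] using (summable_z_mul f).mul_left z3

/-- The functional equation `(1 - z q^k) H(z q^k) = H(z q^(k+1))`. -/
lemma eSer_succ (k : ℕ) : (1 - z3 * q3 ^ k) * eSer k = eSer (k + 1) := by
  have h1 : z3 * q3 ^ k * eSer k
      = ∑' m : ℕ, z3 ^ (m + 1) * (q3 ^ (k * (m + 1)) * eCoef m) := by
    rw [eSer, ← (summable_z_mul _).tsum_mul_left]
    refine tsum_congr fun m => ?_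
    ring
  rw [sub_mul, one_mul, h1, eSer_eq, eSer_eq, add_sub_assoc,
    ← (summable_z_succ_mul _).tsum_sub (summable_z_succ_mul _)]
  congr 1
  refine tsum_congr fun m => ?_
  linear_combination z3 ^ (m + 1) * q3 ^ (k * (m + 1)) * eCoef_succ m

lemma prod_mul_eSer (N : ℕ) :
    (∏ i ∈ Finset.range N, (1 - z3 * q3 ^ i)) * eSer 0 = eSer N := by
  induction N with
  | zero => simp
  | succ N ih => rw [Finset.prod_range_succ, mul_right_comm, ih, mul_comm, eSer_succ]

lemma tendsto_eSer : Filter.Tendsto eSer Filter.atTop (nhds 1) := by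
  rw [tendsto_iff_coeff']
  intro d
  refine tendsto_const_nhds.congr' ?_
  filter_upwards [Filter.eventually_gt_atTop (d 0)] with N hN
  have hdvd : q3 ^ N ∣ eSer N - 1 := by
    refine ⟨∑' m : ℕ, z3 ^ (m + 1) * (q3 ^ (N * m) * eCoef (m + 1)), ?_⟩
    rw [← (summable_z_succ_mul _).tsum_mul_left, eSer_eq, add_sub_cancel_left]
    refine tsum_congr fun m => ?_
    ring
  have := MvPowerSeries.X_pow_dvd_iff.1 hdvd d hN
  rw [map_sub, sub_eq_zero] at this
  exact this.symm

/-- Euler's identity `(z; q)_∞ ∑ₘ z ^ m / (q; q)_m = 1`. -/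
lemma euler : pochInf z3 q3 * ∑' m : ℕ, z3 ^ m * eCoef m = 1 := by
  have h1 : Filter.Tendsto (fun N => (∏ i ∈ Finset.range N, (1 - z3 * q3 ^ i)) * eSer 0)
      Filter.atTop (nhds (pochInf z3 q3 * eSer 0)) :=
    (multipliable_poch.hasProd.tendsto_prod_nat).mul_const _
  simp only [prod_mul_eSer] at h1
  have := tendsto_nhds_unique h1 tendsto_eSer
  simpa [eSer] using this

/-- The coefficient of `z ^ n` in `z ^ d / (z; q)_∞`. -/
def eShift (n d : ℕ) : R3 := if d ≤ n then eCoef (n - d) else 0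

lemma z_pow_eq (d : ℕ) : z3 ^ d = pochInf z3 q3 * ∑' n : ℕ, z3 ^ n * eShift n d := by
  have h : ∑' n : ℕ, z3 ^ n * eShift n d = z3 ^ d * ∑' m : ℕ, z3 ^ m * eCoef m := by
    rw [← (summable_z_mul _).tsum_mul_left, ← (add_left_injective d).tsum_eq]
    · refine tsum_congr fun m => ?_
      simp [eShift]
      ring
    · intro n hn
      rw [Function.mem_support] at hn
      have : d ≤ n := by
        by_contra hlt
        simp [eShift, hlt] at hn
      exact ⟨n - d, Nat.sub_add_cancel this⟩
  rw [h, mul_left_comm, euler, mul_one]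

/-! ### Words and the effect of prepending a letter -/

/-- `1` if the letter `x` followed by `y` makes an `s`-descent, and `0` otherwise. -/
def dlt (r s x y : ℕ) : ℕ := if y < x ∨ (x = y ∧ r - s < x) then 1 else 0

/-- The first letter of a word (`0` for the empty word). -/
def hd (w : List ℕ) : ℕ := w.getD 0 0

lemma sDesSet_cons (r s x : ℕ) {w : List ℕ} (hw : w ≠ []) :
    sDesSet r s (x :: w) = (if dlt r s x (hd w) = 1 then {1} else ∅) ∪
      (sDesSet r s w).map ⟨(· + 1), add_left_injective 1⟩ := by
  have hl : 0 < w.length := List.length_pos_iff.2 hw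
  ext i
  rcases i with _ | _ | i
  · simp [sDesSet]
    split_ifs <;> simp
  · have : ∀ p : Prop, [Decidable p] → (1 ∈ (if p then {1} else ∅ : Finset ℕ) ↔ p) := by
      intro p _
      split_ifs with h <;> simp [h]
    rw [Finset.mem_union, this]
    simp [sDesSet, dlt, hd, hl, hw]
    omega
  · have : ∀ p : Prop, [Decidable p] → (i + 2 ∈ (if p then {1} else ∅ : Finset ℕ) ↔ False) := by
      intro p _
      split_ifs with h <;> simp
    rw [Finset.mem_union, this]
    simp [sDesSet]

lemma dlt_le (r s x y : ℕ) : dlt r s x y ≤ 1 := by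
  unfold dlt; split_ifs <;> simp

lemma dlt_eq_zero {r s x y : ℕ} : dlt r s x y = 0 ↔ ¬ (y < x ∨ (x = y ∧ r - s < x)) := by
  unfold dlt; split_ifs with h <;> simp [h]

lemma disj_aux (r s : ℕ) (w : List ℕ) (p : Prop) [Decidable p] :
    Disjoint (if p then {1} else ∅ : Finset ℕ)
      ((sDesSet r s w).map ⟨(· + 1), add_left_injective 1⟩) := by
  split_ifs
  · simp [sDesSet]
  · simp

lemma sDes_cons (r s x : ℕ) {w : List ℕ} (hw : w ≠ []) :
    sDes r s (x :: w) = sDes r s w + dlt r s x (hd w) := by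
  rw [sDes, sDesSet_cons r s x hw, Finset.card_union_of_disjoint (disj_aux _ _ _ _),
    Finset.card_map, add_comm, sDes]
  have := dlt_le r s x (hd w)
  split_ifs with h
  · simp [h]
  · simp; omega

lemma sMaj_cons (r s x : ℕ) {w : List ℕ} (hw : w ≠ []) :
    sMaj r s (x :: w) = sMaj r s w + (sDes r s w + dlt r s x (hd w)) := by
  rw [sMaj, sDesSet_cons r s x hw, Finset.sum_union (disj_aux _ _ _ _), Finset.sum_map, sMaj, sDes]
  have := dlt_le r s x (hd w)
  simp only [Function.Embedding.coeFn_mk, Finset.sum_add_distrib, Finset.sum_const, smul_eq_mul,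
    mul_one]
  split_ifs with h
  · simp [h]; omega
  · simp; omega

lemma sDesSet_one {r s : ℕ} (hs : s < r) : sDesSet r s [1] = ∅ := by
  ext i
  simp [sDesSet]
  rintro rfl
  simp; omega

/-- Prepending `x` to the infinite word `w 1 1 1 ⋯` represented by `w`: since `1 1 1 1 ⋯` is
represented by `[1]`, prepending `1` to it changes nothing. -/
def kap (x : ℕ) (w : List ℕ) : List ℕ := if x = 1 ∧ w = [1] then [1] else x :: w

lemma hd_kap (x : ℕ) (w : List ℕ) : hd (kap x w) = x := by
  unfold kap
  split_ifs with h
  · simp [hd, h.1]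
  · simp [hd]

lemma sDes_kap {r s : ℕ} (hs : s < r) (x : ℕ) {w : List ℕ} (hw : w ≠ []) :
    sDes r s (kap x w) = sDes r s w + dlt r s x (hd w) := by
  unfold kap
  split_ifs with h
  · obtain ⟨rfl, rfl⟩ := h
    simp [hd, dlt]; omega
  · exact sDes_cons r s x hw

/-- Prepending a letter shifts every descent by one and may create a descent at position `1`, so
`maj` grows by the new number of descents. -/
lemma sMaj_kap {r s : ℕ} (hs : s < r) (x : ℕ) {w : List ℕ} (hw : w ≠ []) :
    sMaj r s (kap x w) = sMaj r s w + sDes r s (kap x w) := by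
  unfold kap
  split_ifs with h
  · obtain ⟨rfl, rfl⟩ := h
    simp [sDes, sDesSet_one hs]
  · rw [sMaj_cons r s x hw, sDes_cons r s x hw]

/-- Words on `{1, …, r}` ending in a single `1`; such a word `w` represents the infinite word
`w 1 1 1 ⋯`, and every infinite word that is eventually `1` has exactly one representative. -/
abbrev WS (r : ℕ) : Type := {w : List ℕ // IsWordOn r w ∧ EndsInSingle 1 w}

lemma ends_cons {x : ℕ} {w : List ℕ} (hw : w ≠ []) (h1 : w = [1] → x ≠ 1) :
    EndsInSingle 1 (x :: w) ↔ EndsInSingle 1 w := by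
  match w, hw with
  | [a], _ =>
    simp [EndsInSingle]
    rintro rfl
    simpa using h1
  | a :: b :: t, _ => simp [EndsInSingle]

lemma kap_mem {r x : ℕ} (hx : 1 ≤ x ∧ x ≤ r) (w : WS r) :
    IsWordOn r (kap x w.1) ∧ EndsInSingle 1 (kap x w.1) := by
  obtain ⟨w, hw, he⟩ := w
  unfold kap
  split_ifs with h
  · obtain ⟨rfl, rfl⟩ := h
    exact ⟨hw, he⟩
  · refine ⟨?_, (ends_cons he.1 ?_).2 he⟩
    · intro y hy
      rcases List.mem_cons.1 hy with rfl | hy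
      · exact hx
      · exact hw y hy
    · rintro h1 rfl
      exact h ⟨rfl, h1⟩

/-- `kap` as a self-map of `WS r`. -/
def kapW {r x : ℕ} (hx : 1 ≤ x ∧ x ≤ r) (w : WS r) : WS r := ⟨kap x w.1, kap_mem hx w⟩

lemma kapW_injective {r x : ℕ} (hx : 1 ≤ x ∧ x ≤ r) : Function.Injective (kapW hx) := by
  rintro ⟨v, hv, hv'⟩ ⟨w, hw, hw'⟩ h
  have h2 : kap x v = kap x w := congrArg Subtype.val h
  apply Subtype.ext
  change v = w
  have hv0 := hv'.1
  have hw0 := hw'.1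
  unfold kap at h2
  split_ifs at h2 with h3 h4 h4
  · rw [h3.2, h4.2]
  · simp at h2; exact absurd h2.2 hw0
  · simp at h2; exact absurd h2.2 hv0
  · simpa using h2

lemma mem_range_kapW {r x : ℕ} (hx : 1 ≤ x ∧ x ≤ r) (w : WS r) (hw : hd w.1 = x) :
    w ∈ Set.range (kapW hx) := by
  obtain ⟨w, hw1, hw2⟩ := w
  match w, hw2.1 with
  | [a], _ =>
    have h1 : a = 1 := by simpa using hw2.2.1
    subst h1
    simp [hd] at hw
    subst hw
    exact ⟨⟨[1], hw1, hw2⟩, by simp [kapW, kap]⟩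
  | a :: b :: t, _ =>
    simp [hd] at hw
    subst hw
    have h1 : b :: t = [1] → a ≠ 1 := by
      rintro h
      simp at h
      obtain ⟨rfl, rfl⟩ := h
      simpa using hw2.2.2
    refine ⟨⟨b :: t, fun y hy => hw1 y (List.mem_cons_of_mem _ hy),
      (ends_cons (by simp) h1).1 hw2⟩, ?_⟩
    apply Subtype.ext
    change kap a (b :: t) = _
    rw [kap, if_neg]
    rintro ⟨h2, h3⟩
    exact h1 h3 h2

lemma hd_mem {r : ℕ} (w : WS r) : hd w.1 ∈ Finset.Icc 1 r := by
  obtain ⟨w, hw, he⟩ := w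
  match w, he.1 with
  | a :: t, _ => simpa [hd] using hw a (by simp)

/-- The last letter but one of a word of length at least `2` in `WS r` is a descent. -/
lemma length_mem_sDesSet {r s : ℕ} (w : WS r) (h : 1 < w.1.length) :
    w.1.length - 1 ∈ sDesSet r s w.1 := by
  obtain ⟨w, hw, he⟩ := w
  simp only at h ⊢
  have h2 := he.2.2 h
  have h1 : w.getD (w.length - 1) 0 = 1 := by
    have := he.2.1
    rw [List.getLast?_eq_getElem?] at this
    simp [List.getD, this]
  have h3 : 1 ≤ w.getD (w.length - 2) 0 := by
    rw [List.getD_eq_getElem _ _ (by omega)]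
    exact (hw _ (List.getElem_mem _)).1
  simp only [sDesSet, Finset.mem_filter, Finset.mem_Icc]
  refine ⟨by omega, Or.inl ⟨by omega, Or.inl ?_⟩⟩
  rw [h1, show w.length - 1 - 1 = w.length - 2 by omega]
  omega

lemma length_le_sMaj {r s : ℕ} (w : WS r) : w.1.length ≤ sMaj r s w.1 + 1 := by
  by_cases h : 1 < w.1.length
  · have := Finset.single_le_sum (f := fun i : ℕ => i) (fun _ _ => Nat.zero_le _)
      (length_mem_sDesSet (s := s) w h)
    rw [sMaj]
    omega
  · omega

lemma finite_sMaj_le (r s N : ℕ) : {w : WS r | sMaj r s w.1 ≤ N}.Finite := by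
  have h1 := List.finite_length_le (Fin (r + 1)) (N + 1)
  refine Set.Finite.of_finite_image (f := Subtype.val) ?_ Subtype.val_injective.injOn
  refine (h1.image (List.map Fin.val)).subset ?_
  rintro _ ⟨w, hw, rfl⟩
  refine ⟨w.1.map (Fin.ofNat (r + 1)), ?_, ?_⟩
  · have := length_le_sMaj (s := s) w
    simp only [Set.mem_ofPred_eq, List.length_map] at hw ⊢
    omega
  · rw [List.map_map]
    conv_rhs => rw [← List.map_id w.1]
    refine List.map_congr_left fun x hx => ?_
    have := w.2.1 x hx
    simp [Fin.ofNat]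
    omega

/-! ### The recursion for the coefficients of `z ^ n` -/

/-- `u_x`, with the convention `u_1 = 1`. -/
def uu (x : ℕ) : R3 := if x = 1 then 1 else u3 x

/-- `u_2 ^ c_2 ⋯ u_r ^ c_r`, where `c_i` is the number of occurrences of `i` in `w`. -/
def uwt (r : ℕ) (w : List ℕ) : R3 := ∏ i ∈ Finset.Icc 2 r, u3 i ^ w.count i

lemma uwt_kap {r x : ℕ} (hx : 1 ≤ x ∧ x ≤ r) (w : List ℕ) :
    uwt r (kap x w) = uu x * uwt r w := by
  have key : uwt r (x :: w) = uu x * uwt r w := by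
    simp only [uwt, uu, List.count_cons, pow_add, Finset.prod_mul_distrib]
    rw [mul_comm]
    congr 1
    simp only [beq_iff_eq, pow_ite, pow_one, pow_zero, Finset.prod_ite_eq, Finset.mem_Icc]
    split_ifs <;> first | rfl | omega
  unfold kap
  split_ifs with h
  · obtain ⟨rfl, rfl⟩ := h
    simp [uu]
  · exact key

/-- The contribution of the word `w` to the coefficient of `z ^ n` in the generating function of
`WS r` divided by `(z; q)_∞`. -/
def vwt (r s n : ℕ) (w : List ℕ) : R3 := q3 ^ sMaj r s w * (uwt r w * eShift n (sDes r s w))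

/-- The recursion `1 / (q; q)_m - 1 / (q; q)_{m-1} = q ^ m / (q; q)_m` for `m = n + 1 - d`. -/
lemma eShift_sub (n d : ℕ) :
    q3 ^ d * (eShift (n + 1) d - eShift n d) = q3 ^ (n + 1) * eShift (n + 1) d := by
  unfold eShift
  by_cases h : d ≤ n
  · obtain ⟨m, rfl⟩ := Nat.exists_eq_add_of_le h
    rw [if_pos (by omega), if_pos (by omega), show d + m + 1 - d = m + 1 by omega,
      show d + m - d = m by omega, eCoef_succ]
    ring
  · by_cases h' : d = n + 1
    · subst h'
      simp
    · rw [if_neg (by omega), if_neg (by omega)]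
      ring

lemma eShift_add {n e : ℕ} (he : e ≤ 1) (d : ℕ) :
    eShift (n + 1) (d + e) = eShift (n + 1 - e) d := by
  unfold eShift
  by_cases h : d + e ≤ n + 1
  · rw [if_pos h, if_pos (by omega)]
    congr 1
    omega
  · rw [if_neg h, if_neg (by omega)]

/-- The first difference in `n` of the contribution of a word, in terms of the word without its
first letter. -/
lemma vwt_kap {r s x : ℕ} (hs : s < r) (hx : 1 ≤ x ∧ x ≤ r) (n : ℕ) {w : List ℕ} (hw : w ≠ []) :
    vwt r s (n + 1) (kap x w) - vwt r s n (kap x w)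
      = uu x * q3 ^ (n + 1) * vwt r s (n + 1 - dlt r s x (hd w)) w := by
  have h := eShift_sub n (sDes r s (kap x w))
  have h2 : eShift (n + 1) (sDes r s (kap x w))
      = eShift (n + 1 - dlt r s x (hd w)) (sDes r s w) := by
    rw [sDes_kap hs x hw, eShift_add (dlt_le _ _ _ _)]
  rw [h2] at h
  simp only [vwt]
  rw [sMaj_kap hs x hw, uwt_kap hx, pow_add, h2]
  linear_combination q3 ^ sMaj r s w * uu x * uwt r w * h

lemma summable_q_mul (r s : ℕ) (f : WS r → R3) :
    Summable fun w : WS r => q3 ^ sMaj r s w.1 * f w :=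
  summable_of_dvd (fun w => sMaj r s w.1) (fun _ => 0)
    (fun A _ => (finite_sMaj_le r s A).subset fun _ h => h.1)
    (fun _ => Dvd.intro _ rfl) (fun _ => by simp)

lemma summable_vwt (r s n : ℕ) : Summable fun w : WS r => vwt r s n w.1 :=
  summable_q_mul r s _

/-- The coefficient (a power series in `q` and the `u_i`) of `z ^ n` in the generating function of
`WS r` divided by `(z; q)_∞`. -/
def tot (r s n : ℕ) : R3 := ∑' w : WS r, vwt r s n w.1

lemma summable_diff (r s n x : ℕ) : Summable fun w : WS r =>
    if hd w.1 = x then vwt r s (n + 1) w.1 - vwt r s n w.1 else 0 := by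
  have := summable_q_mul r s fun w : WS r => if hd w.1 = x then
    uwt r w.1 * eShift (n + 1) (sDes r s w.1) - uwt r w.1 * eShift n (sDes r s w.1) else 0
  refine this.congr fun w => ?_
  simp only [vwt]
  split_ifs <;> ring

/-- The part of `tot r s (n + 1) - tot r s n` coming from the words that start with `x`. -/
def dif (r s n x : ℕ) : R3 :=
  ∑' w : WS r, if hd w.1 = x then vwt r s (n + 1) w.1 - vwt r s n w.1 else 0

lemma tot_succ (r s n : ℕ) : tot r s (n + 1) = tot r s n + ∑ x ∈ Finset.Icc 1 r, dif r s n x := by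
  simp only [tot, dif]
  rw [← Summable.tsum_finsetSum fun x _ => summable_diff r s n x,
    ← (summable_vwt r s n).tsum_add (summable_sum fun x _ => summable_diff r s n x)]
  refine tsum_congr fun w => ?_
  rw [Finset.sum_ite_eq, if_pos (hd_mem w)]
  ring

/-- Deleting the first letter `x` turns a word starting with `x` into an arbitrary word. -/
lemma dif_eq {r s x : ℕ} (hs : s < r) (hx : 1 ≤ x ∧ x ≤ r) (n : ℕ) :
    dif r s n x = uu x * q3 ^ (n + 1) *
      (tot r s n + ∑ y ∈ (Finset.Icc 1 r).filter (fun y => dlt r s x y = 0), dif r s n y) := by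
  have h1 : dif r s n x = ∑' w : WS r,
      uu x * q3 ^ (n + 1) * vwt r s (n + 1 - dlt r s x (hd w.1)) w.1 := by
    rw [dif, ← (kapW_injective hx).tsum_eq]
    · refine tsum_congr fun w => ?_
      rw [← vwt_kap hs hx n w.2.2.1]
      exact if_pos (hd_kap x w.1)
    · intro w hw
      rw [Function.mem_support] at hw
      refine mem_range_kapW hx w ?_
      by_contra h
      exact hw (if_neg h)
  have h2 : Summable fun w : WS r => ∑ y ∈ (Finset.Icc 1 r).filter (fun y => dlt r s x y = 0),
      if hd w.1 = y then vwt r s (n + 1) w.1 - vwt r s n w.1 else 0 :=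
    summable_sum fun y _ => summable_diff r s n y
  rw [h1]
  simp only [tot, dif]
  rw [← Summable.tsum_finsetSum fun x _ => summable_diff r s n x,
    ← (summable_vwt r s n).tsum_add h2, ← ((summable_vwt r s n).add h2).tsum_mul_left]
  refine tsum_congr fun w => ?_
  congr 1
  rw [Finset.sum_ite_eq]
  have := dlt_le r s x (hd w.1)
  by_cases h : dlt r s x (hd w.1) = 0
  · rw [if_pos (Finset.mem_filter.2 ⟨hd_mem w, h⟩), h]
    simp
  -- a descent `x y`: the index `n + 1 - 1 = n` leaves just the term of `tot r s n`
  · have h' : hd w.1 ∉ (Finset.Icc 1 r).filter (fun y => dlt r s x y = 0) :=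
      fun h' => h (Finset.mem_filter.1 h').2
    rw [if_neg h', show dlt r s x (hd w.1) = 1 by omega]
    simp

/-- A triangular linear system: partial sums `Q x = t + ∑_{y ≥ x} d y`, where
`d x = a x * Q (x + 1)` for `x > m` and `d x = a x * Q x` for `x ≤ m`. -/
lemma triangular (r m : ℕ) (hm : m ≤ r) (t : R3) (a d : ℕ → R3)
    (h1 : ∀ x, m < x → x ≤ r → d x = a x * (t + ∑ y ∈ Finset.Ico (x + 1) (r + 1), d y))
    (h2 : ∀ x, 1 ≤ x → x ≤ m → d x = a x * (t + ∑ y ∈ Finset.Ico x (r + 1), d y)) :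
    (t + ∑ y ∈ Finset.Ico 1 (r + 1), d y) * ∏ x ∈ Finset.Ico 1 (m + 1), (1 - a x)
      = t * ∏ x ∈ Finset.Ico (m + 1) (r + 1), (1 + a x) := by
  have hlarge : ∀ k, k ≤ r - m → t + ∑ y ∈ Finset.Ico (r + 1 - k) (r + 1), d y
      = t * ∏ x ∈ Finset.Ico (r + 1 - k) (r + 1), (1 + a x) := by
    intro k
    induction k with
    | zero => simp
    | succ k ih =>
      intro hk
      have ih' := ih (by omega)
      obtain ⟨x, hx⟩ : ∃ x, x = r + 1 - (k + 1) := ⟨_, rfl⟩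
      rw [show r + 1 - k = x + 1 by omega] at ih'
      rw [← hx, Finset.sum_eq_sum_Ico_succ_bot (by omega),
        Finset.prod_eq_prod_Ico_succ_bot (by omega), h1 x (by omega) (by omega), ih']
      linear_combination ih'
  have hsmall : ∀ j, j ≤ m →
      (t + ∑ y ∈ Finset.Ico 1 (r + 1), d y) * ∏ x ∈ Finset.Ico 1 (j + 1), (1 - a x)
        = t + ∑ y ∈ Finset.Ico (j + 1) (r + 1), d y := by
    intro j
    induction j with
    | zero => simp
    | succ j ih =>
      intro hj
      have h := h2 (j + 1) (by omega) hj
      rw [Finset.prod_Ico_succ_top (by omega), ← mul_assoc, ih (by omega)]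
      rw [Finset.sum_eq_sum_Ico_succ_bot (by omega)] at h ⊢
      linear_combination h
  rw [hsmall m le_rfl]
  have := hlarge (r - m) le_rfl
  rwa [show r + 1 - (r - m) = m + 1 by omega] at this

lemma tot_rec {r s : ℕ} (hs : s < r) (n : ℕ) :
    tot r s (n + 1) * ∏ x ∈ Finset.Ico 1 (r - s + 1), (1 - uu x * q3 ^ (n + 1))
      = tot r s n * ∏ x ∈ Finset.Ico (r - s + 1) (r + 1), (1 + uu x * q3 ^ (n + 1)) := by
  have h := triangular r (r - s) (by omega) (tot r s n) (fun x => uu x * q3 ^ (n + 1))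
    (dif r s n) ?_ ?_
  · rw [tot_succ]
    exact h
  · intro x h1 h2
    rw [dif_eq hs ⟨by omega, h2⟩]
    congr 3
    ext y
    rw [Finset.mem_filter, Finset.mem_Icc, Finset.mem_Ico, dlt_eq_zero]
    omega
  · intro x h1 h2
    rw [dif_eq hs ⟨h1, by omega⟩]
    congr 3
    ext y
    rw [Finset.mem_filter, Finset.mem_Icc, Finset.mem_Ico, dlt_eq_zero]
    omega

/-- Only the word `[1]` has no descents. -/
lemma tot_zero {r s : ℕ} (hs : s < r) : tot r s 0 = 1 := by
  have hmem : IsWordOn r [1] ∧ EndsInSingle 1 [1] := by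
    constructor
    · intro x hx
      simp at hx
      omega
    · simp [EndsInSingle]
  rw [tot, tsum_eq_single (⟨[1], hmem⟩ : WS r)]
  · simp only [vwt, uwt, sMaj, sDes, sDesSet_one hs]
    rw [Finset.prod_eq_one]
    · simp [eShift, eCoef_zero]
    · intro i hi
      have : i ≠ 1 := by
        have := (Finset.mem_Icc.1 hi).1
        omega
      simp [this.symm]
  -- every word other than `[1]` has a descent, so it does not contribute to `z ^ 0`
  · intro w hw
    have hlen : 1 < w.1.length := by
      by_contra hle
      obtain ⟨w, hw1, hw2⟩ := w
      match w, hw2.1 with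
      | [a], _ =>
        have h1 : a = 1 := by simpa using hw2.2.1
        subst h1
        exact hw rfl
      | a :: b :: t, _ => simp at hle
    have hd : 0 < sDes r s w.1 := Finset.card_pos.2 ⟨_, length_mem_sDesSet w hlen⟩
    simp [vwt, eShift, hd.ne']

lemma tot_mul {r s : ℕ} (hs : s < r) (n : ℕ) :
    tot r s n * (poch q3 q3 n * ∏ i ∈ Finset.Icc 2 (r - s), poch (q3 * u3 i) q3 n)
      = ∏ j ∈ Finset.Icc (r - s + 1) r, poch (-(q3 * u3 j)) q3 n := by
  induction n with
  | zero => simp [poch, tot_zero hs]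
  | succ n ih =>
    have h := tot_rec hs n
    have hb : ∏ x ∈ Finset.Ico 1 (r - s + 1), (1 - uu x * q3 ^ (n + 1))
        = (1 - q3 * q3 ^ n) * ∏ i ∈ Finset.Icc 2 (r - s), (1 - q3 * u3 i * q3 ^ n) := by
      rw [Finset.prod_eq_prod_Ico_succ_bot (by omega)]
      congr 1
      · simp [uu, pow_succ']
      · refine Finset.prod_congr rfl fun i hi => ?_
        have : i ≠ 1 := by
          have := (Finset.mem_Ico.1 hi).1
          omega
        rw [uu, if_neg this]
        ring
    have ha : ∏ x ∈ Finset.Ico (r - s + 1) (r + 1), (1 + uu x * q3 ^ (n + 1))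
        = ∏ j ∈ Finset.Icc (r - s + 1) r, (1 - -(q3 * u3 j) * q3 ^ n) := by
      refine Finset.prod_congr rfl fun i hi => ?_
      have : i ≠ 1 := by
        have := (Finset.mem_Ico.1 hi).1
        omega
      rw [uu, if_neg this]
      ring
    rw [hb, ha] at h
    simp only [poch_succ, Finset.prod_mul_distrib]
    rw [← ih]
    linear_combination (poch q3 q3 n * ∏ i ∈ Finset.Icc 2 (r - s), poch (q3 * u3 i) q3 n) * h

lemma tot_eq {r s : ℕ} (hs : s < r) (n : ℕ) :
    tot r s n = (∏ j ∈ Finset.Icc (r - s + 1) r, poch (-(q3 * u3 j)) q3 n) *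
      Ring.inverse (poch q3 q3 n * ∏ i ∈ Finset.Icc 2 (r - s), poch (q3 * u3 i) q3 n) := by
  have hu : IsUnit (poch q3 q3 n * ∏ i ∈ Finset.Icc 2 (r - s), poch (q3 * u3 i) q3 n) := by
    refine (isUnit_poch _ (by simp [q3]) n).mul ?_
    rw [IsUnit.prod_iff]
    exact fun i _ => isUnit_poch _ (by simp [q3]) n
  rw [← tot_mul hs n, Ring.mul_inverse_cancel_right _ _ hu]

/-! ### The identity -/

/-- The sum over all tuples `c = (c₂, …, c_r)` and all words `w ∈ R̄(c)` of
`q^{maj_s w} z^{des_s w} u₂^{c₂} ⋯ u_r^{c_r}` equals the sum over all words on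
`{1, …, r}` ending in a single `x₁`, with `c_i` the number of occurrences of
`x_i` in `w`. -/
theorem statement13 (r s : ℕ) (hr : 1 ≤ r) (hs : s < r) :
    ∑' w : {w : List ℕ // IsWordOn r w ∧ EndsInSingle 1 w},
        q3 ^ sMaj r s w.1 * z3 ^ sDes r s w.1 *
          ∏ i ∈ Finset.Icc 2 r, (u3 i) ^ w.1.count i
    = pochInf z3 q3 *
      ∑' n : ℕ,
        z3 ^ n * (∏ j ∈ Finset.Icc (r - s + 1) r, poch (-(q3 * u3 j)) q3 n) *
          Ring.inverse (poch q3 q3 n * ∏ i ∈ Finset.Icc 2 (r - s), poch (q3 * u3 i) q3 n) := by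
  have hfib : ∀ w : WS r, q3 ^ sMaj r s w.1 * z3 ^ sDes r s w.1 *
      ∏ i ∈ Finset.Icc 2 r, (u3 i) ^ w.1.count i
      = pochInf z3 q3 * ∑' n : ℕ, z3 ^ n * vwt r s n w.1 := by
    intro w
    have h : ∑' n : ℕ, z3 ^ n * vwt r s n w.1 = q3 ^ sMaj r s w.1 * uwt r w.1 *
        ∑' n : ℕ, z3 ^ n * eShift n (sDes r s w.1) := by
      rw [← (summable_z_mul _).tsum_mul_left]
      refine tsum_congr fun n => ?_
      rw [vwt]
      ring
    rw [h, z_pow_eq, uwt]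
    ring
  have hsum2 : Summable fun p : WS r × ℕ => z3 ^ p.2 * vwt r s p.2 p.1.1 := by
    refine summable_of_dvd (fun p => sMaj r s p.1.1) (fun p => p.2) (fun A B => ?_)
      (fun p => (Dvd.intro _ rfl).mul_left _) (fun p => Dvd.intro _ rfl)
    exact ((finite_sMaj_le r s A).prod (Set.finite_Iic B)).subset fun p hp => hp
  have hsum1 : Summable fun w : WS r => ∑' n : ℕ, z3 ^ n * vwt r s n w.1 := by
    have := summable_q_mul r s fun w : WS r =>
      ∑' n : ℕ, z3 ^ n * (uwt r w.1 * eShift n (sDes r s w.1))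
    refine this.congr fun w => ?_
    rw [← (summable_z_mul _).tsum_mul_left]
    refine tsum_congr fun n => ?_
    rw [vwt]
    ring
  rw [tsum_congr hfib, hsum1.tsum_mul_left]
  congr 1
  have hswap : ∑' w : WS r, ∑' n : ℕ, z3 ^ n * vwt r s n w.1
      = ∑' n : ℕ, ∑' w : WS r, z3 ^ n * vwt r s n w.1 :=
    (Summable.tsum_comm' (f := fun (n : ℕ) (w : WS r) => z3 ^ n * vwt r s n w.1)
      hsum2.prod_symm (fun n => (summable_vwt r s n).mul_left _) (fun w => summable_z_mul _))
  rw [hswap]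
  refine tsum_congr fun n => ?_
  rw [(summable_vwt r s n).tsum_mul_left, mul_assoc, ← tot_eq hs n, tot]
end
end
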